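/- arXiv:2110.04154 — 4 statements merged into one kernel-verified Lean document; each statement's English description precedes it below -/
import Mathlib

section
/- If 2 ≤ m−1 ≤ n and the Hamming graph H(m,n) has distinguishing number 2, then the cost of 2-distinguishing satisfies ρ(H(m,n)) ∈ {det(H(m,n)), det(H(m,n)) + 1}. -/
/-!
Fix a set of `r` vertices of `H(m,n)`, that is, `r` words of length `n` over `m` letters. Each
coordinate partitions the words according to their letter there, so the set is described, up to
relabelling of the letters, by `n` partitions of `r` points into at most `m` blocks. As the
automorphisms of `H(m,n)` are the permutations of the coordinates combined with a relabelling of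
each coordinate (`ham_structure`), the set is determining precisely when all partitions have
`m - 1` or `m` blocks (the good partitions) and no two coordinates give the same partition. It is a
color class of a 2-distinguishing coloring if moreover the family of the `n` partitions is
asymmetric, that is, preserved by no permutation of the `r` points but the identity
(`exists_distClass`). In particular `det ≤ ρ`, and `ρ ≤ det + 1` holds as soon as there is an
asymmetric family of `n` good partitions of at most `r + 1` points, where `r = det(H(m,n))`.

For `r > m` there is an asymmetric family `F` of exactly `r` good partitions of `r` points
(`exists_core`): for `r = m + 1` each of them has a single block with more than one element, and
these blocks are the edges of a path through all points together with a triple; points are then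
added one at a time (`Core.step`). If `r ≤ n`, partitions coming from a determining set of size `r`
complete `F` to a family of size `n`, and this family extends to an asymmetric one on `r + 1` points
(`Core.asym_ext`): the block which receives the new point records which members belong to `F`.
If `n < r`, a core on `n` points is enough when `n > m`.

For `r = m`, and for `m - 1 ≤ n ≤ m`, the family lives on `m + 1` points (`exists_small`): an
asymmetric hypergraph with at most `m - 1` edges of size 2 or 3 (at most 3 when `m = 3`) is
completed by partitions with two blocks of size 2. This fails only for `H(3,2)`, which has no
2-distinguishing coloring (`distNum_three_two`).
-/

/-- `S` is a determining set for `G`: the only automorphism fixing `S` pointwise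
is the identity. -/
def IsDeterminingSet {V : Type*} (G : SimpleGraph V) (S : Set V) : Prop :=
  ∀ φ : G ≃g G, (∀ v ∈ S, φ v = v) → ∀ v, φ v = v

/-- The determining number: minimum size of a determining set. -/
noncomputable def detNum {V : Type*} (G : SimpleGraph V) : ℕ :=
  sInf {r | ∃ S : Set V, S.ncard = r ∧ IsDeterminingSet G S}

/-- A coloring is distinguishing if the only automorphism preserving all color
classes is the identity. -/
def IsDistinguishing {V : Type*} (G : SimpleGraph V) {d : ℕ} (c : V → Fin d) : Prop :=
  ∀ φ : G ≃g G, (∀ v, c (φ v) = c v) → ∀ v, φ v = v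

/-- The distinguishing number: least `d` admitting a distinguishing `d`-coloring. -/
noncomputable def distNum {V : Type*} (G : SimpleGraph V) : ℕ :=
  sInf {d | ∃ c : V → Fin d, IsDistinguishing G c}

/-- `S` is a color class of a 2-distinguishing coloring: every automorphism
preserving `S` setwise is the identity. -/
def IsDistClass {V : Type*} (G : SimpleGraph V) (S : Set V) : Prop :=
  ∀ φ : G ≃g G, (∀ v, φ v ∈ S ↔ v ∈ S) → ∀ v, φ v = v

/-- The cost of 2-distinguishing: minimum size of a color class over all
2-distinguishing colorings. -/
noncomputable def costNum {V : Type*} (G : SimpleGraph V) : ℕ :=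
  sInf {m | ∃ S : Set V, S.ncard = m ∧ IsDistClass G S}

/-- The Hamming graph `H(m,n) = K_m^{□n}`: vertices `[m]^n`, adjacent iff they
differ in exactly one coordinate. -/
def Ham (m n : ℕ) : SimpleGraph (Fin n → Fin m) :=
  SimpleGraph.fromRel (fun x y => hammingDist x y = 1)

/-- Stirling numbers of the second kind. -/
def stirling2 : ℕ → ℕ → ℕ
  | 0, 0 => 1
  | 0, _ + 1 => 0
  | _ + 1, 0 => 0
  | r + 1, k + 1 => (k + 1) * stirling2 r (k + 1) + stirling2 r k

/-! ### Automorphisms of the Hamming graph -/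

open Function

lemma ham_adj {m n : ℕ} {x y : Fin n → Fin m} :
    (Ham m n).Adj x y ↔ ∃ i, x i ≠ y i ∧ ∀ j, j ≠ i → x j = y j := by
  have key : hammingDist x y = 1 ↔ ∃ i, x i ≠ y i ∧ ∀ j, j ≠ i → x j = y j := by
    rw [hammingDist, Finset.card_eq_one]
    refine exists_congr fun i => ?_
    rw [Finset.ext_iff]
    constructor
    · intro h
      refine ⟨by simpa using (h i), fun j hj => ?_⟩
      by_contra hne
      exact hj (by simpa [hne] using h j)
    · rintro ⟨h, h'⟩ j
      by_cases hj : j = i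
      · subst hj; simpa using h
      · simp [hj, h' j hj]
  have : (Ham m n).Adj x y ↔ hammingDist x y = 1 := by
    rw [Ham, SimpleGraph.fromRel_adj, hammingDist_comm y x, or_self]
    refine ⟨fun h => h.2, fun h => ⟨?_, h⟩⟩
    rintro rfl
    simp at h
  rw [this, key]

/-- The automorphism of `Ham m n` permuting the coordinates by `σ` and then relabelling the
`i`-th coordinate by `π i`. -/
def hamIso {m n : ℕ} (σ : Equiv.Perm (Fin n)) (π : Fin n → Equiv.Perm (Fin m)) :
    Ham m n ≃g Ham m n where
  toFun x i := π i (x (σ i))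
  invFun y i := (π (σ.symm i)).symm (y (σ.symm i))
  left_inv x := by funext i; simp
  right_inv y := by funext i; simp
  map_rel_iff' := by
    intro x y
    simp only [ham_adj, Equiv.coe_fn_mk, ne_eq, EmbeddingLike.apply_eq_iff_eq]
    constructor
    · rintro ⟨i, h, h'⟩
      refine ⟨σ i, h, fun j hj => ?_⟩
      have := h' (σ.symm j) (fun e => hj (by simp [← e]))
      simpa using this
    · rintro ⟨i, h, h'⟩
      exact ⟨σ.symm i, by simpa using h, fun j hj => h' _ (fun e => hj (by simp [← e]))⟩

@[simp] lemma hamIso_apply {m n : ℕ} (σ : Equiv.Perm (Fin n)) (π : Fin n → Equiv.Perm (Fin m))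
    (x : Fin n → Fin m) (i : Fin n) : hamIso σ π x i = π i (x (σ i)) := rfl

section Structure

variable {m n : ℕ} (φ : Ham m n ≃g Ham m n)

/-- `φ` maps the line through `x` in direction `i` into a line in direction `a`. -/
def Dir (x : Fin n → Fin m) (i a : Fin n) : Prop :=
  ∀ v, ∀ j, j ≠ a → φ (update x i v) j = φ x j

variable {φ}

lemma image_edge (φ : Ham m n ≃g Ham m n) {x : Fin n → Fin m} {i : Fin n} {u v : Fin m}
    (h : u ≠ v) : ∃ a, φ (update x i u) a ≠ φ (update x i v) a ∧
      ∀ j, j ≠ a → φ (update x i u) j = φ (update x i v) j := by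
  rw [← ham_adj, φ.map_adj_iff, ham_adj]
  exact ⟨i, by simpa using h, fun j hj => by simp [hj]⟩

lemma Dir.ne {x : Fin n → Fin m} {i a : Fin n} (h : Dir φ x i a) {u v : Fin m} (huv : u ≠ v) :
    φ (update x i u) a ≠ φ (update x i v) a := by
  intro e
  apply huv
  have : φ (update x i u) = φ (update x i v) := by
    funext j
    by_cases hj : j = a
    · rw [hj, e]
    · rw [h u j hj, h v j hj]
  simpa using congrFun (φ.injective this) i

/-- Three vertices on a line form a triangle, and the three edges of a triangle all have the same
direction; hence `φ` maps lines into lines. -/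
lemma exists_dir (hm : 2 ≤ m) (x : Fin n → Fin m) (i : Fin n) : ∃ a, Dir φ x i a := by
  obtain ⟨v0, hv0⟩ : ∃ v0, v0 ≠ x i := by
    have : Nontrivial (Fin m) := Fin.nontrivial_iff_two_le.2 hm
    exact exists_ne _
  obtain ⟨a, ha, ha'⟩ := image_edge φ (x := x) (i := i) hv0
  rw [update_eq_self] at ha ha'
  refine ⟨a, fun v j hj => ?_⟩
  by_cases hv : v = x i
  · rw [hv, update_eq_self]
  by_cases hv' : v = v0
  · rw [hv', ha' j hj]
  obtain ⟨b, hb, hb'⟩ := image_edge φ (x := x) (i := i) hv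
  rw [update_eq_self] at hb hb'
  obtain ⟨c, hc, hc'⟩ := image_edge φ (x := x) (i := i) hv'
  have hba : b = a := by
    by_contra hne
    have h1 : b = c := by
      by_contra h
      exact hb ((hc' b h).trans (ha' b hne))
    have h2 : a = c := by
      by_contra h
      exact ha ((hc' a h).symm.trans (hb' a (Ne.symm hne)))
    exact hne (h1.trans h2.symm)
  subst hba
  exact hb' j hj

lemma Dir.inj {x : Fin n → Fin m} (hm : 2 ≤ m) {i j a : Fin n} (hi : Dir φ x i a)
    (hj : Dir φ x j a) : i = j := by
  by_contra hne
  have : Nontrivial (Fin m) := Fin.nontrivial_iff_two_le.2 hm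
  obtain ⟨v, hv⟩ := exists_ne (x i)
  obtain ⟨u, hu⟩ := exists_ne (x j)
  -- the images of the two neighbours lie on a common line, so they are equal or adjacent
  by_cases e : φ (update x i v) a = φ (update x j u) a
  · have : φ (update x i v) = φ (update x j u) := by
      funext k
      by_cases hk : k = a
      · rw [hk, e]
      · rw [hi v k hk, hj u k hk]
    have := congrFun (φ.injective this) i
    simp [hne] at this
    exact hv this
  · have : (Ham m n).Adj (update x i v) (update x j u) := by
      rw [← φ.map_adj_iff, ham_adj]
      exact ⟨a, e, fun k hk => by rw [hi v k hk, hj u k hk]⟩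
    obtain ⟨k, -, hk⟩ := ham_adj.1 this
    by_cases hki : i = k
    · have := hk j (fun h => hne (hki.trans h.symm))
      simp [Ne.symm hne] at this
      exact hu this.symm
    · have := hk i hki
      simp [hne] at this
      exact hv this

/-- Opposite edges of a chordless 4-cycle are parallel, and this is preserved by `φ`: the direction
of the image of a line does not change when the line is translated. -/
lemma Dir.update_of_ne (hm : 2 ≤ m) {x : Fin n → Fin m} {i a : Fin n} (hi : Dir φ x i a)
    {j : Fin n} (hij : j ≠ i) (u : Fin m) : Dir φ (update x j u) i a := by
  obtain ⟨b, hb⟩ := exists_dir (φ := φ) hm x j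
  have hab : a ≠ b := by
    rintro rfl
    exact hij (hb.inj hm hi)
  intro v k hk
  by_cases hv : v = x i
  · have : update (update x j u) i v = update x j u := by
      rw [hv]; funext l; by_cases hl : l = i
      · subst hl; simp [hij.symm]
      · simp [hl]
    rw [this]
  by_cases hu : u = x j
  · rw [hu, update_eq_self]; exact hi v k hk
  have hY : φ (update x i v) a ≠ φ x a := by
    simpa using hi.ne hv
  have hZ : φ (update x j u) b ≠ φ x b := by
    simpa using hb.ne hu
  obtain ⟨c, -, hc⟩ : ∃ c, φ (update (update x j u) i v) c ≠ φ (update x i v) c ∧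
      ∀ l, l ≠ c → φ (update (update x j u) i v) l = φ (update x i v) l := by
    rw [← ham_adj, φ.map_adj_iff, ham_adj]
    refine ⟨j, by simpa [hij] using hu, fun l hl => ?_⟩
    by_cases hli : l = i
    · subst hli; simp
    · simp [hl, hli]
  obtain ⟨d, -, hd⟩ : ∃ d, φ (update (update x j u) i v) d ≠ φ (update x j u) d ∧
      ∀ l, l ≠ d → φ (update (update x j u) i v) l = φ (update x j u) l := by
    rw [← ham_adj, φ.map_adj_iff, ham_adj]
    refine ⟨i, by simpa [hij.symm] using hv, fun l hl => by simp [hl]⟩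
  by_cases hda : d = a
  · exact hd k (hda ▸ hk)
  exfalso
  have hWa : φ (update (update x j u) i v) a = φ x a := by
    rw [hd a (Ne.symm hda), hb u a hab]
  have hca : a = c := by
    by_contra h
    exact hY ((hc a h).symm.trans hWa)
  have hWb : φ (update (update x j u) i v) b = φ x b := by
    rw [hc b (fun h => hab (hca.trans h.symm)), hi v b hab.symm]
  have : φ (update (update x j u) i v) = φ x := by
    funext l
    by_cases hl : l = a
    · rw [hl, hWa]
    · rw [hc l (hca ▸ hl), hi v l hl]
  have := congrFun (φ.injective this) i
  simp at this
  exact hv this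

lemma update_induction {p : (Fin n → Fin m) → Prop} (x0 : Fin n → Fin m) (h0 : p x0)
    (h : ∀ x j u, p x → p (update x j u)) (x : Fin n → Fin m) : p x := by
  have : ∀ s : Finset (Fin n), p (s.piecewise x x0) := by
    intro s
    induction s using Finset.induction_on with
    | empty => simpa using h0
    | insert a s _ ih =>
      rw [Finset.piecewise_insert]
      exact h _ _ _ ih
  simpa using this Finset.univ

/-- Every automorphism of `Ham m n` permutes the coordinates and relabels each of them: the
automorphism group is the wreath product of two symmetric groups. -/
theorem ham_structure (hm : 2 ≤ m) (φ : Ham m n ≃g Ham m n) :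
    ∃ (d : Equiv.Perm (Fin n)) (g : Fin n → Equiv.Perm (Fin m)),
      ∀ x i, φ x (d i) = g i (x i) := by
  let x0 : Fin n → Fin m := fun _ => ⟨0, by omega⟩
  choose d hd using fun i => exists_dir (φ := φ) hm x0 i
  have hd' : ∀ i x, Dir φ x i (d i) := by
    intro i
    refine update_induction x0 (hd i) ?_
    intro x j u hx
    by_cases hj : j = i
    · subst hj
      intro v k hk
      rw [update_idem, hx v k hk, hx u k hk]
    · exact hx.update_of_ne hm hj u
  have dinj : Injective d := fun i j h => (hd i).inj hm (h ▸ hd j)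
  have hval : ∀ i x u, φ (update x i u) (d i) = φ (update x0 i u) (d i) := by
    intro i
    refine update_induction x0 (fun _ => rfl) ?_
    intro x j v hx u
    by_cases hj : j = i
    · subst hj
      rw [update_idem, hx]
    · rw [update_comm hj, hd' j _ v (d i) (fun e => hj (dinj e).symm), hx]
  have ginj : ∀ i, Injective fun u => φ (update x0 i u) (d i) := by
    intro i u v h
    by_contra hne
    exact (hd i).ne hne h
  refine ⟨Equiv.ofBijective d (Finite.injective_iff_bijective.1 dinj),
    fun i => Equiv.ofBijective _ (Finite.injective_iff_bijective.1 (ginj i)), fun x i => ?_⟩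
  have := hval i x (x i)
  rw [update_eq_self] at this
  simpa using this

end Structure

/-- A 3 × 3 matrix of two symbols is preserved by a non-trivial combination of row and column
permutations, or by such a combination with a transposition (`fl = true`). -/
lemma bool_matrix_symm : ∀ a b c d e f g h k : Bool,
    ∃ (fl : Bool) (p q : Equiv.Perm (Fin 3)), (fl = true ∨ p ≠ 1 ∨ q ≠ 1) ∧
      ∀ i j : Fin 3, ![![a, b, c], ![d, e, f], ![g, h, k]]
        (if fl then p j else p i) (if fl then q i else q j) =
        ![![a, b, c], ![d, e, f], ![g, h, k]] i j := by
  decide +kernel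

/-! ### Families of partitions -/

open Classical in
/-- The partition of `α` whose only block with more than one element is `B`. -/
def oneBlock {α : Type*} (B : Finset α) : Setoid α where
  r x y := x = y ∨ (x ∈ B ∧ y ∈ B)
  iseqv := ⟨fun _ => Or.inl rfl, by tauto, by
    rintro x y z (rfl | h) (rfl | h') <;> tauto⟩

/-- `P` has `m - 1` or `m` blocks (stated without truncated subtraction). -/
def Good {α : Type*} (m : ℕ) (P : Setoid α) : Prop :=
  m ≤ Nat.card (Quotient P) + 1 ∧ Nat.card (Quotient P) ≤ m

/-- `{a}` is a block of the partition `P`. -/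
def IsSing {α : Type*} (P : Setoid α) (a : α) : Prop := ∀ b, P a b → b = a

/-- The family `F` of partitions is asymmetric: only the identity permutation maps it to itself. -/
def Asym {α : Type*} (F : Finset (Setoid α)) : Prop :=
  ∀ τ : Equiv.Perm α, (∀ P ∈ F, P.comap τ ∈ F) → τ = 1

/-- The partition of `Option α` obtained from `P` by putting the new point `none` into the block
of `x`. -/
abbrev ext {α : Type*} (P : Setoid α) (x : α) : Setoid (Option α) := P.comap (fun o => o.getD x)

/-- An asymmetric family of partitions to which points can be added: each partition has a singleton
block, and each point is a singleton block of two members, except for one point `w` for which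
one member is enough. -/
structure Core {α : Type*} (m : ℕ) (F : Finset (Setoid α)) (w : α) : Prop where
  asym : Asym F
  good : ∀ P ∈ F, Good m P
  hasSing : ∀ P ∈ F, ∃ a, IsSing P a
  singW : ∃ P ∈ F, IsSing P w
  singTwo : ∀ a, a ≠ w → ∃ P ∈ F, ∃ Q ∈ F, P ≠ Q ∧ IsSing P a ∧ IsSing Q a

section Partitions

variable {α : Type*} {m : ℕ}

lemma good_ker {β : Type*} {f : α → β} :
    Good m (Setoid.ker f) ↔ m ≤ (Set.range f).ncard + 1 ∧ (Set.range f).ncard ≤ m := by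
  rw [Good, Nat.card_congr (Setoid.quotientKerEquivRange f)]
  rfl

lemma ext_eq_ker (P : Setoid α) (x : α) :
    ext P x = Setoid.ker (fun o : Option α => (Quotient.mk P (o.getD x))) := by
  refine Setoid.ext fun a b => ?_
  rw [Setoid.comap_rel, Setoid.ker_def]
  exact Quotient.eq.symm

lemma ext_good {P : Setoid α} (h : Good m P) (x : α) : Good m (ext P x) := by
  rw [ext_eq_ker, good_ker]
  have : Set.range (fun o : Option α => (Quotient.mk P (o.getD x))) = Set.univ := by
    rw [Set.range_eq_univ]
    intro q
    induction q using Quotient.inductionOn with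
    | h a => exact ⟨some a, rfl⟩
  rw [this, Set.ncard_univ]
  exact h

lemma comap_some_ext (P : Setoid α) (x : α) : (ext P x).comap some = P := rfl

lemma ext_some_some {P : Setoid α} {x a b : α} : ext P x (some a) (some b) ↔ P a b := Iff.rfl

lemma ext_none_some {P : Setoid α} {x b : α} : ext P x none (some b) ↔ P x b := Iff.rfl

lemma not_isSing_ext_none (P : Setoid α) (x : α) : ¬ IsSing (ext P x) none := by
  intro h
  have := h (some x) (ext_none_some.2 (P.refl' x))
  simp at this

lemma isSing_ext_some {P : Setoid α} {x a : α} (hx : ¬ IsSing P x) (ha : IsSing P a) :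
    IsSing (ext P x) (some a) := by
  intro b hb
  cases b with
  | none =>
    exfalso
    have : x = a := ha x hb
    exact hx (this ▸ ha)
  | some b => rw [ha b hb]

lemma isSing_comap {β : Type*} (τ : β ≃ α) (P : Setoid α) (a : β) :
    IsSing (P.comap τ) a ↔ IsSing P (τ a) := by
  constructor
  · intro h b hb
    have := h (τ.symm b) (by rw [Setoid.comap_rel]; simpa using hb)
    rw [← this]; simp
  · intro h b hb
    exact τ.injective (h _ hb)

lemma comap_equiv_injective {β : Type*} (τ : β ≃ α) :
    Function.Injective (fun P : Setoid α => P.comap τ) :=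
  Setoid.comap_injective _ τ.surjective

lemma good_comap {β : Type*} (τ : β ≃ α) {P : Setoid α} (h : Good m P) :
    Good m (P.comap τ) := by
  have e : Quotient (P.comap τ) ≃ Quotient P := Quotient.congr τ (fun a b => Iff.rfl)
  rwa [Good, Nat.card_congr e]

/-- A partition of more than `m` points into at most `m` blocks has a block which is not a
singleton. -/
lemma Good.exists_not_isSing [Finite α] {P : Setoid α} (h : Good m P) (hα : m < Nat.card α) :
    ∃ a, ¬ IsSing P a := by
  by_contra! hs
  have : Function.Injective (Quotient.mk P) := fun a b hab => hs b a (Quotient.eq.1 hab.symm)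
  have := Nat.card_le_card_of_injective _ this
  have := h.2
  omega

lemma oneBlock_isSing {B : Finset α} (hB : 2 ≤ B.card) {a : α} :
    IsSing (oneBlock B) a ↔ a ∉ B := by
  constructor
  · intro h ha
    obtain ⟨b, hb, hne⟩ := Finset.exists_mem_ne (s := B) (by omega) a
    exact hne (h b (Or.inr ⟨ha, hb⟩))
  · rintro h b (rfl | hb)
    · rfl
    · exact absurd hb.1 h

lemma oneBlock_injective {B C : Finset α} (hB : 2 ≤ B.card) (hC : 2 ≤ C.card)
    (h : oneBlock B = oneBlock C) : B = C := by
  ext a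
  rw [← not_iff_not, ← oneBlock_isSing hB, ← oneBlock_isSing hC, h]

open Classical in
lemma comap_oneBlock {β : Type*} (τ : β ≃ α) (B : Finset α) :
    (oneBlock B).comap τ = oneBlock (B.map τ.symm.toEmbedding) := by
  refine Setoid.ext fun a b => ?_
  have : ∀ a, a ∈ B.map τ.symm.toEmbedding ↔ τ a ∈ B := by
    intro a
    simp [Finset.mem_map_equiv]
  change (τ a = τ b ∨ τ a ∈ B ∧ τ b ∈ B) ↔ (a = b ∨ _ ∧ _)
  rw [this, this, τ.injective.eq_iff]

lemma oneBlock_good [Fintype α] {B : Finset α} (hB : B.Nonempty)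
    (h1 : m + B.card ≤ Fintype.card α + 2) (h2 : Fintype.card α + 1 ≤ m + B.card) :
    Good m (oneBlock B) := by
  classical
  obtain ⟨b, hb⟩ := hB
  have hk : oneBlock B = Setoid.ker (fun x => if x ∈ B then b else x) := by
    refine Setoid.ext fun x y => ?_
    change (x = y ∨ x ∈ B ∧ y ∈ B) ↔ (if x ∈ B then b else x) = (if y ∈ B then b else y)
    split_ifs with hx hy hy
    · simp [hx, hy]
    · simp only [hx, hy]
      constructor
      · rintro (rfl | h)
        · exact absurd hx hy
        · simp at h
      · rintro rfl; exact absurd hb hy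
    · simp only [hx, hy]
      constructor
      · rintro (rfl | h)
        · exact absurd hy hx
        · simp at h
      · rintro rfl; exact absurd hb hx
    · simp [hx, hy]
  have hr : Set.range (fun x => if x ∈ B then b else x) = ((insert b Bᶜ : Finset α) : Set α) := by
    ext y
    simp only [Set.mem_range, Finset.coe_insert, Finset.coe_compl, Set.mem_insert_iff,
      Set.mem_compl_iff, Finset.mem_coe]
    constructor
    · rintro ⟨x, rfl⟩
      split_ifs with hx
      · exact Or.inl rfl
      · exact Or.inr hx
    · rintro (rfl | hy)
      · exact ⟨y, by simp⟩
      · exact ⟨y, by simp [hy]⟩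
  have hc : (insert b Bᶜ : Finset α).card = Fintype.card α - B.card + 1 := by
    rw [Finset.card_insert_of_notMem (by simpa using hb), Finset.card_compl]
  have hle := Finset.card_le_univ B
  rw [hk, good_ker, hr, Set.ncard_coe_finset, hc]
  omega

lemma some_removeNone {τ : Equiv.Perm (Option α)} (hτ : τ none = none) (a : α) :
    some (Equiv.removeNone τ a) = τ (some a) := by
  apply Equiv.removeNone_some
  cases e : τ (some a) with
  | none => exact absurd (τ.injective (e.trans hτ.symm)) (by simp)
  | some b => exact ⟨b, rfl⟩

/-- If `τ` fixes the new point and maps an extension of `P` to an extension of `P'`, then its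
restriction to the old points maps `P` to `P'`. -/
lemma comap_removeNone {τ : Equiv.Perm (Option α)} (hτ : τ none = none) {P P' : Setoid α}
    {x x' : α} (h : (ext P x).comap τ = ext P' x') : P.comap (Equiv.removeNone τ) = P' := by
  have hs := some_removeNone hτ
  rw [← comap_some_ext P' x', ← h]
  refine Setoid.ext fun a b => ?_
  change P _ _ ↔ ext P x (τ (some a)) (τ (some b))
  rw [← hs, ← hs]
  rfl

lemma eq_one_of_removeNone {τ : Equiv.Perm (Option α)} (hτ : τ none = none)
    (h : Equiv.removeNone τ = 1) : τ = 1 := by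
  have hs := some_removeNone hτ
  ext1 o
  cases o with
  | none => exact hτ
  | some a => rw [← hs, h]; rfl

open Classical in
/-- Adding a point to a core: the new point is put into a non-singleton block of each member, and
one further partition is added, with the new point and `w` as singletons. The new point is then
the only one which is a singleton of a single member, so it is fixed by every symmetry. -/
lemma Core.step [Fintype α] {F : Finset (Setoid α)} {w : α} (hF : Core m F w) (hm : 3 ≤ m)
    (hα : m < Fintype.card α) :
    ∃ F' : Finset (Setoid (Option α)), Core m F' none ∧ F'.card = F.card + 1 := by
  have hns : ∀ P, ∃ c, P ∈ F → ¬ IsSing P c := by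
    intro P
    by_cases hP : P ∈ F
    · obtain ⟨c, hc⟩ := (hF.good P hP).exists_not_isSing (by simpa using hα)
      exact ⟨c, fun _ => hc⟩
    · exact ⟨w, fun h => absurd h hP⟩
  choose c hc using hns
  obtain ⟨B, hBw, hB⟩ : ∃ B ⊆ Finset.univ.erase w, B.card = Fintype.card α + 2 - m := by
    apply Finset.exists_subset_card_eq
    rw [Finset.card_erase_of_mem (Finset.mem_univ _), Finset.card_univ]
    omega
  have hwB : w ∉ B := fun h => by simpa using hBw h
  set Q : Setoid (Option α) := oneBlock (B.map Function.Embedding.some) with hQ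
  have hBc : 2 ≤ (B.map Function.Embedding.some).card := by rw [Finset.card_map]; omega
  have hQn : IsSing Q none := by rw [hQ, oneBlock_isSing hBc]; simp
  have hQw : IsSing Q (some w) := by rw [hQ, oneBlock_isSing hBc]; simpa using hwB
  have hQg : Good m Q := by
    apply oneBlock_good (Finset.card_pos.1 (by omega)) <;>
      rw [Finset.card_map, Fintype.card_option] <;> omega
  have hinj : Function.Injective (fun P => ext P (c P)) := by
    intro P P' h
    have := congrArg (fun R => Setoid.comap some R) h
    simpa only [comap_some_ext] using this
  set E := F.image (fun P => ext P (c P)) with hE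
  have hQE : Q ∉ E := by
    intro h
    obtain ⟨P, -, hP⟩ := Finset.mem_image.1 h
    exact not_isSing_ext_none P (c P) (hP ▸ hQn)
  have hmem : ∀ {P}, P ∈ F → ext P (c P) ∈ insert Q E := fun hP =>
    Finset.mem_insert_of_mem (Finset.mem_image_of_mem _ hP)
  have huniq : ∀ R ∈ insert Q E, IsSing R none → R = Q := by
    intro R hR hs
    rcases Finset.mem_insert.1 hR with h | h
    · exact h
    · obtain ⟨P, -, rfl⟩ := Finset.mem_image.1 h
      exact absurd hs (not_isSing_ext_none P (c P))
  have htwo : ∀ a : Option α, a ≠ none →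
      ∃ P ∈ insert Q E, ∃ P' ∈ insert Q E, P ≠ P' ∧ IsSing P a ∧ IsSing P' a := by
    intro a ha
    obtain ⟨a, rfl⟩ := Option.ne_none_iff_exists'.1 ha
    by_cases haw : a = w
    · subst haw
      obtain ⟨P, hP, hs⟩ := hF.singW
      refine ⟨_, hmem hP, Q, Finset.mem_insert_self _ _, ?_, isSing_ext_some (hc P hP) hs, hQw⟩
      intro h
      exact not_isSing_ext_none P (c P) (h ▸ hQn)
    · obtain ⟨P, hP, P', hP', hne, hs, hs'⟩ := hF.singTwo a haw
      exact ⟨_, hmem hP, _, hmem hP', hinj.ne hne, isSing_ext_some (hc P hP) hs,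
        isSing_ext_some (hc P' hP') hs'⟩
  refine ⟨insert Q E, ⟨?_, ?_, ?_, ⟨Q, Finset.mem_insert_self _ _, hQn⟩, htwo⟩, ?_⟩
  · intro τ hτ
    have hnone : τ none = none := by
      by_contra hne
      obtain ⟨P, hP, P', hP', hPP, hs, hs'⟩ := htwo _ hne
      apply hPP
      apply comap_equiv_injective τ
      exact (huniq _ (hτ P hP) ((isSing_comap τ P none).2 hs)).trans
        (huniq _ (hτ P' hP') ((isSing_comap τ P' none).2 hs')).symm
    apply eq_one_of_removeNone hnone
    apply hF.asym
    intro P hP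
    have h1 := hτ _ (hmem hP)
    rcases Finset.mem_insert.1 h1 with h | h
    · have : IsSing (ext P (c P)) (τ none) := by
        rw [← isSing_comap, h]; exact hQn
      rw [hnone] at this
      exact absurd this (not_isSing_ext_none _ _)
    · obtain ⟨P', hP', h'⟩ := Finset.mem_image.1 h
      rw [comap_removeNone hnone h'.symm]
      exact hP'
  · intro R hR
    rcases Finset.mem_insert.1 hR with rfl | h
    · exact hQg
    · obtain ⟨P, hP, rfl⟩ := Finset.mem_image.1 h
      exact ext_good (hF.good P hP) _
  · intro R hR
    rcases Finset.mem_insert.1 hR with rfl | h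
    · exact ⟨none, hQn⟩
    · obtain ⟨P, hP, rfl⟩ := Finset.mem_image.1 h
      obtain ⟨a, ha⟩ := hF.hasSing P hP
      exact ⟨some a, isSing_ext_some (hc P hP) ha⟩
  · rw [Finset.card_insert_of_notMem hQE, hE, Finset.card_image_of_injective _ hinj]

open Classical in
/-- A family `H` of partitions containing a core `F` extends, without change of size, to an
asymmetric family on one more point. The new point is put into a non-singleton block of the
members of `F`, and next to a singleton for the other members (if possible): then the new point
is the only one which is never a singleton, and `F` can be recognized inside `H`. -/
lemma Core.asym_ext [Fintype α] {F H : Finset (Setoid α)} {w : α} (hF : Core m F w)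
    (hα : m < Fintype.card α) (hFH : F ⊆ H) (hH : ∀ P ∈ H, Good m P) :
    ∃ H' : Finset (Setoid (Option α)), Asym H' ∧ (∀ P ∈ H', Good m P) ∧ H'.card = H.card := by
  have hns : ∀ P, ∃ c, (P ∈ F → ¬ IsSing P c) ∧ (P ∉ F → (∃ a, IsSing P a) → IsSing P c) := by
    intro P
    by_cases hP : P ∈ F
    · obtain ⟨c, hc⟩ := (hF.good P hP).exists_not_isSing (by simpa using hα)
      exact ⟨c, fun _ => hc, fun h => absurd hP h⟩
    · by_cases h : ∃ a, IsSing P a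
      · exact ⟨h.choose, fun h => absurd h hP, fun _ _ => h.choose_spec⟩
      · exact ⟨w, fun h => absurd h hP, fun _ h' => absurd h' h⟩
  choose c hc hc' using hns
  have hinj : Function.Injective (fun P => ext P (c P)) := by
    intro P P' h
    have := congrArg (fun R => Setoid.comap some R) h
    simpa only [comap_some_ext] using this
  refine ⟨H.image (fun P => ext P (c P)), ?_, ?_, Finset.card_image_of_injective _ hinj⟩
  · intro τ hτ
    have hnone : τ none = none := by
      by_contra hne
      obtain ⟨a, ha⟩ := Option.ne_none_iff_exists'.1 hne
      obtain ⟨P, hP, hs⟩ : ∃ P ∈ F, IsSing P a := by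
        by_cases haw : a = w
        · exact haw ▸ hF.singW
        · obtain ⟨P, hP, -, -, -, hs, -⟩ := hF.singTwo a haw
          exact ⟨P, hP, hs⟩
      have h1 := hτ _ (Finset.mem_image_of_mem _ (hFH hP))
      obtain ⟨P', -, h'⟩ := Finset.mem_image.1 h1
      apply not_isSing_ext_none P' (c P')
      change ext P' (c P') = _ at h'
      rw [h', isSing_comap, ha]
      exact isSing_ext_some (hc P hP) hs
    apply eq_one_of_removeNone hnone
    apply hF.asym
    intro P hP
    obtain ⟨P', hP', h'⟩ := Finset.mem_image.1 (hτ _ (Finset.mem_image_of_mem _ (hFH hP)))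
    have hPP := comap_removeNone hnone h'.symm
    rw [hPP]
    by_contra hP'F
    obtain ⟨a, ha⟩ := hF.hasSing P hP
    have hsing : IsSing P' (c P') := by
      refine hc' P' hP'F ⟨(Equiv.removeNone τ).symm a, ?_⟩
      rw [← hPP, isSing_comap]
      rw [Equiv.apply_symm_apply]; exact ha
    -- the new point shares its block with a singleton of the old points, hence so does its image
    have h1 : (ext P (c P)).comap τ none (some (c P')) := by
      rw [← h']; exact ext_none_some.2 (P'.refl' _)
    have hsing' : IsSing P (Equiv.removeNone τ (c P')) := by
      rw [← isSing_comap, hPP]; exact hsing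
    rw [Setoid.comap_rel, hnone, ← some_removeNone hnone, ext_none_some] at h1
    exact hc P hP (hsing' _ (P.symm' h1) ▸ hsing')
  · intro R hR
    obtain ⟨P, hP, rfl⟩ := Finset.mem_image.1 hR
    exact ext_good (hH P hP) _

end Partitions

/-! ### Asymmetric hypergraphs and the families they give -/

section Base

open Classical in
lemma asym_oneBlock {α : Type*} {𝔅 : Finset (Finset α)} (h2 : ∀ B ∈ 𝔅, 2 ≤ B.card)
    (h : ∀ ρ : Equiv.Perm α, (∀ B ∈ 𝔅, B.map ρ.toEmbedding ∈ 𝔅) → ρ = 1) :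
    Asym (𝔅.image oneBlock) := by
  intro τ hτ
  have : τ.symm = 1 := by
    apply h
    intro B hB
    obtain ⟨C, hC, hCB⟩ := Finset.mem_image.1 (hτ _ (Finset.mem_image_of_mem _ hB))
    rw [comap_oneBlock] at hCB
    rwa [← oneBlock_injective (h2 C hC) (by rw [Finset.card_map]; exact h2 B hB) hCB]
  rw [← Equiv.symm_symm τ, this]
  rfl

/-- The hypergraph consisting of the path `p 0, p 1, …, p k` (as 2-element edges) and of a further
edge `T`. -/
def pathHyp {α : Type*} [DecidableEq α] (p : ℕ → α) (k : ℕ) (T : Finset α) : Finset (Finset α) :=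
  insert T ((Finset.range k).image fun j => {p j, p (j + 1)})

variable {α : Type*} [DecidableEq α] {p : ℕ → α} {k : ℕ} {T : Finset α}

lemma mem_pathHyp {B : Finset α} :
    B ∈ pathHyp p k T ↔ B = T ∨ ∃ j < k, B = {p j, p (j + 1)} := by
  simp [pathHyp, eq_comm]

lemma card_pathEdge (hp : Set.InjOn p (Set.Iic k)) {j : ℕ} (hj : j < k) :
    ({p j, p (j + 1)} : Finset α).card = 2 := by
  apply Finset.card_pair
  intro e
  have := hp (by simp; omega) (by simp; omega) e
  omega

/-- If the triple `T` contains the first edge of the path and no other edge, then the symmetries of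
the hypergraph fix all points of the path. -/
lemma pathHyp_fix (hp : Set.InjOn p (Set.Iic k)) (hk : 2 ≤ k) (hT : T.card = 3) (h0 : p 0 ∈ T)
    (h1 : p 1 ∈ T) (hT' : ∀ j, 1 ≤ j → j < k → p j ∈ T → p (j + 1) ∉ T) {ρ : Equiv.Perm α}
    (hρ : ∀ B ∈ pathHyp p k T, B.map ρ.toEmbedding ∈ pathHyp p k T) :
    T.map ρ.toEmbedding = T ∧ ∀ j ≤ k, ρ (p j) = p j := by
  have hTρ : T.map ρ.toEmbedding = T := by
    rcases mem_pathHyp.1 (hρ T (mem_pathHyp.2 (Or.inl rfl))) with h | ⟨j, hj, h⟩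
    · exact h
    · have := congrArg Finset.card h
      rw [Finset.card_map, hT, card_pathEdge hp hj] at this
      omega
  have hTmem : ∀ a ∈ T, ρ a ∈ T := fun a ha => by
    rw [← hTρ]; exact Finset.mem_map_of_mem ρ.toEmbedding ha
  have hedge : ∀ j < k, ∃ i < k, (ρ (p j) = p i ∧ ρ (p (j + 1)) = p (i + 1)) ∨
      (ρ (p j) = p (i + 1) ∧ ρ (p (j + 1)) = p i) := by
    intro j hj
    rcases mem_pathHyp.1 (hρ _ (mem_pathHyp.2 (Or.inr ⟨j, hj, rfl⟩))) with h | ⟨i, hi, h⟩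
    · have := congrArg Finset.card h
      rw [Finset.card_map, hT, card_pathEdge hp hj] at this
      omega
    · refine ⟨i, hi, ?_⟩
      have hne : ρ (p j) ≠ ρ (p (j + 1)) := by
        intro e
        have := hp (by simp; omega) (by simp; omega) (ρ.injective e)
        omega
      rw [Finset.map_insert, Finset.map_singleton] at h
      have a1 : ρ (p j) ∈ ({p i, p (i + 1)} : Finset α) := by rw [← h]; simp
      have a2 : ρ (p (j + 1)) ∈ ({p i, p (i + 1)} : Finset α) := by rw [← h]; simp
      simp only [Finset.mem_insert, Finset.mem_singleton] at a1 a2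
      rcases a1 with a1 | a1 <;> rcases a2 with a2 | a2
      · exact absurd (a1.trans a2.symm) hne
      · exact Or.inl ⟨a1, a2⟩
      · exact Or.inr ⟨a1, a2⟩
      · exact absurd (a1.trans a2.symm) hne
  have hpe : ∀ {i j}, i ≤ k → j ≤ k → p i = p j → i = j := fun hi hj e => hp hi hj e
  have h01 : ρ (p 0) = p 0 ∧ ρ (p 1) = p 1 := by
    obtain ⟨i, hi, h⟩ := hedge 0 (by omega)
    have hi0 : i = 0 := by
      by_contra hne
      have a0 := hTmem _ h0
      have a1 := hTmem _ h1
      rcases h with ⟨e, e'⟩ | ⟨e, e'⟩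
      · exact hT' i (by omega) hi (e ▸ a0) (e' ▸ a1)
      · exact hT' i (by omega) hi (e' ▸ a1) (e ▸ a0)
    subst hi0
    rcases h with h | ⟨e, e'⟩
    · exact h
    · -- if the first edge is reversed, then `p 2` is mapped to a neighbour of `p 0`, which is `p 1`
      exfalso
      obtain ⟨l, hl, ⟨f, f'⟩ | ⟨f, f'⟩⟩ := hedge 1 (by omega)
      · have : l = 0 := hpe (by omega) (by omega) (f.symm.trans e')
        subst this
        have := hpe (by omega) (by omega) (ρ.injective (e.trans f'.symm))
        omega
      · have := hpe (by omega) (by omega) (f.symm.trans e')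
        omega
  refine ⟨hTρ, ?_⟩
  have : ∀ j, j + 1 ≤ k → ρ (p j) = p j ∧ ρ (p (j + 1)) = p (j + 1) := by
    intro j
    induction j with
    | zero => exact fun _ => h01
    | succ j ih =>
      intro hj
      obtain ⟨e, e'⟩ := ih (by omega)
      refine ⟨e', ?_⟩
      obtain ⟨i, hi, ⟨f, f'⟩ | ⟨f, f'⟩⟩ := hedge (j + 1) (by omega)
      · have hji := hpe (by omega) (by omega) (e'.symm.trans f)
        subst hji
        exact f'
      · have h2 := hpe (by omega) (by omega) (e'.symm.trans f)
        have : i = j := by omega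
        subst this
        have := hpe (by omega) (by omega) (ρ.injective (e.trans f'.symm))
        omega
  intro j hj
  rcases Nat.lt_or_ge j k with h | h
  · exact (this j h).1
  · obtain rfl : j = k := by omega
    obtain ⟨l, rfl⟩ : ∃ l, j = l + 1 := ⟨j - 1, by omega⟩
    exact (this l le_rfl).2

open Classical in
/-- The path through all `m + 1` points together with the triple of its first two points and its
last point gives a core. The second point is taken for `w`, since for `m = 3` it is avoided by a
single edge. -/
lemma exists_core_base {m : ℕ} (hm : 3 ≤ m) :
    ∃ (F : Finset (Setoid (Fin (m + 1)))) (w : Fin (m + 1)), Core m F w ∧ F.card = m + 1 := by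
  set p : ℕ → Fin (m + 1) := fun j => Fin.ofNat (m + 1) j with hpdef
  have hval : ∀ {j}, j ≤ m → (p j).val = j := by
    intro j hj
    simp [hpdef, Nat.mod_eq_of_lt (Nat.lt_succ_of_le hj)]
  have hp : Set.InjOn p (Set.Iic m) := by
    intro i hi j hj e
    rw [← hval hi, ← hval hj, e]
  have hne : ∀ {i j}, i ≤ m → j ≤ m → i ≠ j → p i ≠ p j := fun hi hj h e => h (hp hi hj e)
  have hsurj : ∀ a, ∃ j ≤ m, a = p j := fun a =>
    ⟨a.val, by omega, Fin.ext (hval (by omega)).symm⟩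
  set T : Finset (Fin (m + 1)) := {p 0, p 1, p m} with hTdef
  have hT : T.card = 3 := Finset.card_eq_three.2
    ⟨_, _, _, hne (by omega) (by omega) (by omega), hne (by omega) (by omega) (by omega),
      hne (by omega) (by omega) (by omega), rfl⟩
  have hmemT : ∀ {j}, j ≤ m → (p j ∈ T ↔ j = 0 ∨ j = 1 ∨ j = m) := by
    intro j hj
    simp only [hTdef, Finset.mem_insert, Finset.mem_singleton]
    rw [hp.eq_iff (by simpa using hj) (by simp), hp.eq_iff (by simpa using hj) (by simp; omega),
      hp.eq_iff (by simpa using hj) (by simp)]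
  have hmemE : ∀ {i j}, j ≤ m → i < m →
      (p j ∈ ({p i, p (i + 1)} : Finset (Fin (m + 1))) ↔ j = i ∨ j = i + 1) := by
    intro i j hj hi
    simp only [Finset.mem_insert, Finset.mem_singleton]
    rw [hp.eq_iff (by simpa using hj) (by simp; omega),
      hp.eq_iff (by simpa using hj) (by simp; omega)]
  set 𝔅 := pathHyp p m T with h𝔅
  have hcard : ∀ B ∈ 𝔅, B.card = 2 ∨ B.card = 3 := by
    intro B hB
    rcases mem_pathHyp.1 hB with rfl | ⟨j, hj, rfl⟩
    · exact Or.inr hT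
    · exact Or.inl (card_pathEdge hp hj)
  have h2 : ∀ B ∈ 𝔅, 2 ≤ B.card := fun B hB => by have := hcard B hB; omega
  have hE : ∀ {j}, j < m → ({p j, p (j + 1)} : Finset (Fin (m + 1))) ∈ 𝔅 := fun hj =>
    mem_pathHyp.2 (Or.inr ⟨_, hj, rfl⟩)
  have hcount : 𝔅.card = m + 1 := by
    rw [h𝔅, pathHyp, Finset.card_insert_of_notMem, Finset.card_image_of_injOn, Finset.card_range]
    · intro i hi j hj e
      simp only [Finset.coe_range, Set.mem_Iio] at hi hj
      simp only at e
      have a1 := (hmemE (i := j) (j := i) (by omega) hj).1 (by rw [← e]; simp)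
      have a2 := (hmemE (i := i) (j := j) (by omega) hi).1 (by rw [e]; simp)
      omega
    · intro h
      obtain ⟨j, hj, h⟩ := Finset.mem_image.1 h
      have := card_pathEdge hp (Finset.mem_range.1 hj)
      rw [h] at this
      omega
  have hmem : ∀ {B}, B ∈ 𝔅 → oneBlock B ∈ 𝔅.image oneBlock := fun h =>
    Finset.mem_image_of_mem _ h
  have hs : ∀ {B}, B ∈ 𝔅 → ∀ {a}, a ∉ B → IsSing (oneBlock B) a := fun h _ ha =>
    (oneBlock_isSing (h2 _ h)).2 ha
  refine ⟨𝔅.image oneBlock, p 1, ⟨asym_oneBlock h2 ?_, ?_, ?_, ?_, ?_⟩, ?_⟩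
  · intro ρ hρ
    have := (pathHyp_fix hp (by omega) hT (by simp [hTdef]) (by simp [hTdef]) (by
      intro j h1 hj a b
      rw [hmemT (by omega)] at a b
      omega) hρ).2
    ext1 a
    obtain ⟨j, hj, rfl⟩ := hsurj a
    exact this j hj
  · intro P hP
    obtain ⟨B, hB, rfl⟩ := Finset.mem_image.1 hP
    have := hcard B hB
    apply oneBlock_good (Finset.card_pos.1 (by omega)) <;> rw [Fintype.card_fin] <;> omega
  · intro P hP
    obtain ⟨B, hB, rfl⟩ := Finset.mem_image.1 hP
    have hBc := hcard B hB
    obtain ⟨a, ha⟩ : ∃ a, a ∉ B := by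
      by_contra! h
      rw [Finset.eq_univ_iff_forall.2 h, Finset.card_univ, Fintype.card_fin] at hBc
      omega
    exact ⟨a, hs hB ha⟩
  · refine ⟨_, hmem (hE (j := 2) (by omega)), hs (hE (by omega)) ?_⟩
    rw [hmemE (by omega) (by omega)]
    omega
  · intro a ha
    have key : ∀ {B C} (b : Fin (m + 1)), B ∈ 𝔅 → C ∈ 𝔅 → a ∉ B → a ∉ C → b ∈ B → b ∉ C →
        ∃ P ∈ 𝔅.image oneBlock, ∃ Q ∈ 𝔅.image oneBlock, P ≠ Q ∧ IsSing P a ∧ IsSing Q a := by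
      intro B C b hB hC haB haC hbB hbC
      refine ⟨_, hmem hB, _, hmem hC, ?_, hs hB haB, hs hC haC⟩
      intro e
      exact hbC (oneBlock_injective (h2 _ hB) (h2 _ hC) e ▸ hbB)
    obtain ⟨j, hj, rfl⟩ := hsurj a
    have hj1 : j ≠ 1 := by rintro rfl; exact ha rfl
    have hTm : T ∈ 𝔅 := mem_pathHyp.2 (Or.inl rfl)
    rcases Nat.lt_or_ge j 1 with h | h
    · refine key (p 1) (hE (j := 1) (by omega)) (hE (j := 2) (by omega)) ?_ ?_ ?_ ?_ <;>
        rw [hmemE (by omega) (by omega)] <;> omega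
    · by_cases hjm : j = m
      · refine key (p 0) (hE (j := 0) (by omega)) (hE (j := 1) (by omega)) ?_ ?_ ?_ ?_ <;>
          rw [hmemE (by omega) (by omega)] <;> omega
      · refine key (p m) hTm (hE (j := 0) (by omega)) ?_ ?_ ?_ ?_
        · rw [hmemT hj]; omega
        · rw [hmemE hj (by omega)]; omega
        · rw [hmemT le_rfl]; omega
        · rw [hmemE le_rfl (by omega)]; omega
  · rw [Finset.card_image_of_injOn, hcount]
    intro B hB C hC e
    exact oneBlock_injective (h2 B hB) (h2 C hC) e

lemma exists_core {m r : ℕ} (hm : 3 ≤ m) (hr : m + 1 ≤ r) :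
    ∃ (α : Type) (_ : Fintype α) (F : Finset (Setoid α)) (w : α),
      Fintype.card α = r ∧ Core m F w ∧ F.card = r := by
  induction r, hr using Nat.le_induction with
  | base =>
    obtain ⟨F, w, h, hc⟩ := exists_core_base hm
    exact ⟨_, inferInstance, F, w, Fintype.card_fin _, h, hc⟩
  | succ r hr ih =>
    obtain ⟨α, _, F, w, hα, hF, hc⟩ := ih
    obtain ⟨F', hF', hc'⟩ := hF.step hm (by omega)
    exact ⟨Option α, inferInstance, F', none, by rw [Fintype.card_option, hα], hF', by omega⟩

/-- There is an asymmetric hypergraph on `m + 1` points with at most `n` edges, all of size 2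
or 3. -/
lemma exists_small_hyp {m n : ℕ} (hm : 3 ≤ m) (hn : m ≤ n + 1) (h32 : ¬ (m = 3 ∧ n = 2)) :
    ∃ 𝔅 : Finset (Finset (Option (Fin m))), (∀ B ∈ 𝔅, B.card = 2 ∨ B.card = 3) ∧
      1 ≤ 𝔅.card ∧ 𝔅.card ≤ n ∧
      ∀ ρ : Equiv.Perm (Option (Fin m)), (∀ B ∈ 𝔅, B.map ρ.toEmbedding ∈ 𝔅) → ρ = 1 := by
  classical
  rcases Nat.lt_or_ge m 4 with h | h4
  · obtain rfl : m = 3 := by omega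
    refine ⟨{{some 0, some 1}, {some 1, some 2}, {some 1, some 2, none}}, by decide +kernel,
      by decide +kernel, ?_, by decide +kernel⟩
    have : ({{some 0, some 1}, {some 1, some 2}, {some 1, some 2, none}} :
      Finset (Finset (Option (Fin 3)))).card = 3 := by decide +kernel
    omega
  have : NeZero m := ⟨by omega⟩
  set p : ℕ → Option (Fin m) := fun j => some (Fin.ofNat m j) with hpdef
  have hp : Set.InjOn p (Set.Iio m) := by
    intro i hi j hj e
    simp only [Set.mem_Iio] at hi hj
    have := congrArg Fin.val (Option.some_injective _ e)
    simpa [Nat.mod_eq_of_lt hi, Nat.mod_eq_of_lt hj] using this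
  have hpk : Set.InjOn p (Set.Iic (m - 2)) := hp.mono (fun x hx => by
    simp only [Set.mem_Iic, Set.mem_Iio] at *; omega)
  have hne : ∀ {i j}, i < m → j < m → i ≠ j → p i ≠ p j := fun hi hj h e => h (hp hi hj e)
  set T : Finset (Option (Fin m)) := {p 0, p 1, p (m - 1)} with hTdef
  have hT : T.card = 3 := Finset.card_eq_three.2
    ⟨_, _, _, hne (by omega) (by omega) (by omega), hne (by omega) (by omega) (by omega),
      hne (by omega) (by omega) (by omega), rfl⟩
  have hmemT : ∀ {j}, j < m → (p j ∈ T ↔ j = 0 ∨ j = 1 ∨ j = m - 1) := by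
    intro j hj
    simp only [hTdef, Finset.mem_insert, Finset.mem_singleton]
    rw [hp.eq_iff hj (by simp; omega), hp.eq_iff hj (by simp; omega),
      hp.eq_iff hj (by simp; omega)]
  refine ⟨pathHyp p (m - 2) T, ?_, ?_, ?_, ?_⟩
  · intro B hB
    rcases mem_pathHyp.1 hB with rfl | ⟨j, hj, rfl⟩
    · exact Or.inr hT
    · exact Or.inl (card_pathEdge hpk hj)
  · exact Finset.card_pos.2 ⟨T, mem_pathHyp.2 (Or.inl rfl)⟩
  · have := Finset.card_insert_le T
      ((Finset.range (m - 2)).image fun j => ({p j, p (j + 1)} : Finset (Option (Fin m))))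
    have h' := Finset.card_image_le (s := Finset.range (m - 2))
      (f := fun j => ({p j, p (j + 1)} : Finset (Option (Fin m))))
    rw [Finset.card_range] at h'
    have e : (pathHyp p (m - 2) T).card ≤ (m - 2) + 1 := by
      unfold pathHyp
      refine le_trans ?_ (Nat.add_le_add_right h' 1)
      exact this
    omega
  · intro ρ hρ
    obtain ⟨hTρ, hfix⟩ := pathHyp_fix hpk (by omega) hT (by simp [hTdef]) (by simp [hTdef]) (by
      intro j h1 hj a b
      rw [hmemT (by omega)] at a b
      omega) hρ
    -- the third point of the triple is fixed since the other two are
    have hlast : ρ (p (m - 1)) = p (m - 1) := by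
      have hmem : ρ (p (m - 1)) ∈ T := by
        rw [← hTρ]
        exact Finset.mem_map_of_mem ρ.toEmbedding (by simp [hTdef])
      simp only [hTdef, Finset.mem_insert, Finset.mem_singleton] at hmem
      rcases hmem with e | e | e
      · have := hp (by simp; omega) (by simp; omega)
          (ρ.injective (e.trans (hfix 0 (by omega)).symm))
        omega
      · have := hp (by simp; omega) (by simp; omega)
          (ρ.injective (e.trans (hfix 1 (by omega)).symm))
        omega
      · exact e
    have hsome : ∀ a, ρ (some a) = some a := by
      intro a
      have ha : some a = p a.val := by
        simp [hpdef]
      rw [ha]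
      by_cases h : a.val ≤ m - 2
      · exact hfix _ h
      · rw [show a.val = m - 1 by omega]
        exact hlast
    ext1 o
    cases o with
    | some a => exact hsome a
    | none =>
      cases e : ρ none with
      | none => rfl
      | some b => exact absurd (ρ.injective (e.trans (hsome b).symm)) (by simp)

/-- On `m` points, a good partition other than the discrete one has `m - 1` blocks, so it has a
single non-trivial block, which is a pair. -/
lemma Good.pair_unique {m : ℕ} {P : Setoid (Fin m)} (h : Good m P) {a b c d : Fin m}
    (hab : P a b) (hne : a ≠ b) (hcd : P c d) (hcd' : c ≠ d) (hcb : c ≠ b) (hdb : d ≠ b) :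
    False := by
  have hsurj : Function.Surjective
      (fun x : ((Finset.univ \ {b, c} : Finset (Fin m)) : Set (Fin m)) =>
        Quotient.mk P x.1) := by
    have hd : d ∈ (Finset.univ \ {b, c} : Finset (Fin m)) := by simp [hdb, hcd'.symm]
    have hc : ∃ x : ((Finset.univ \ {b, c} : Finset (Fin m)) : Set (Fin m)),
        Quotient.mk P x.1 = Quotient.mk P c := ⟨⟨d, hd⟩, Quotient.sound (P.symm' hcd)⟩
    intro q
    induction q using Quotient.inductionOn with
    | h x =>
      by_cases hxc : x = c
      · rw [hxc]; exact hc
      by_cases hxb : x = b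
      · by_cases hac : a = c
        · obtain ⟨y, hy⟩ := hc
          refine ⟨y, hy.trans (Quotient.sound ?_)⟩
          rw [hxb, ← hac]
          exact hab
        · exact ⟨⟨a, by simp [hne, hac]⟩, Quotient.sound (hxb ▸ hab)⟩
      · exact ⟨⟨x, by simp [hxb, hxc]⟩, rfl⟩
  have h1 := Nat.card_le_card_of_surjective _ hsurj
  rw [Nat.card_coe_set_eq, Set.ncard_coe_finset, Finset.card_sdiff_of_subset (by simp),
    Finset.card_univ, Fintype.card_fin, Finset.card_pair hcb.symm] at h1
  have := h.1
  have := b.isLt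
  have := c.isLt
  have hm2 : 2 ≤ m := by
    by_contra hlt
    exact hcb (Fin.ext (by omega))
  omega

lemma Good.exists_isSing {m : ℕ} (hm : 3 ≤ m) {P : Setoid (Fin m)} (h : Good m P) :
    ∃ c, IsSing P c := by
  classical
  by_contra! hs
  have hs' : ∀ c, ∃ d, P c d ∧ d ≠ c := by
    intro c
    have := hs c
    unfold IsSing at this
    push Not at this
    exact this
  let a : Fin m := ⟨0, by omega⟩
  obtain ⟨b, hab, hba⟩ := hs' a
  obtain ⟨c, hc⟩ : ∃ c, c ∉ ({a, b} : Finset (Fin m)) := by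
    by_contra! hall
    have h1 := Finset.card_le_two (a := a) (b := b)
    rw [Finset.eq_univ_iff_forall.2 hall, Finset.card_univ, Fintype.card_fin] at h1
    omega
  simp only [Finset.mem_insert, Finset.mem_singleton, not_or] at hc
  obtain ⟨d, hcd, hdc⟩ := hs' c
  by_cases hdb : d = b
  · subst hdb
    exact h.pair_unique hab hba.symm (P.trans' hcd (P.symm' hab)) hc.1 hc.2 hba.symm
  · exact h.pair_unique hab hba.symm hcd hdc.symm hc.2 hdb

/-- `P` has at most one non-trivial block. -/
def AtMostOne {α : Type*} (P : Setoid α) : Prop :=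
  ∀ x y, ¬ IsSing P x → ¬ IsSing P y → P x y

lemma atMostOne_oneBlock {α : Type*} {B : Finset α} (hB : 2 ≤ B.card) :
    AtMostOne (oneBlock B) := by
  intro x y hx hy
  rw [oneBlock_isSing hB, not_not] at hx hy
  exact Or.inr ⟨hx, hy⟩

lemma AtMostOne.comap {α β : Type*} {P : Setoid α} (τ : β ≃ α) (h : AtMostOne P) :
    AtMostOne (P.comap τ) := by
  intro x y hx hy
  rw [isSing_comap] at hx hy
  exact h _ _ hx hy

open Classical in
/-- Families on `m + 1` points: the partitions given by an asymmetric hypergraph have at most one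
non-trivial block, so they can be recognized when partitions with two pairs as blocks are added.
A pair on the first `m` points is completed by pairing the new point with one of the remaining
points. -/
lemma exists_small {m n : ℕ} (hm : 3 ≤ m) (hn : m ≤ n + 1) (h32 : ¬ (m = 3 ∧ n = 2))
    {G : Finset (Setoid (Fin m))} (hG : ∀ P ∈ G, Good m P) (hbot : ⊥ ∉ G)
    (hGn : n ≤ G.card + 1) :
    ∃ H : Finset (Setoid (Option (Fin m))), Asym H ∧ (∀ P ∈ H, Good m P) ∧ H.card = n := by
  obtain ⟨𝔅, hcard, hpos, hle, hasym⟩ := exists_small_hyp hm hn h32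
  have h2 : ∀ B ∈ 𝔅, 2 ≤ B.card := fun B hB => by have := hcard B hB; omega
  have hsing : ∀ P, ∃ c : Fin m, P ∈ G → IsSing P c := by
    intro P
    by_cases hP : P ∈ G
    · obtain ⟨c, hc⟩ := (hG P hP).exists_isSing hm
      exact ⟨c, fun _ => hc⟩
    · exact ⟨⟨0, by omega⟩, fun h => absurd h hP⟩
  choose c hc using hsing
  have hinj : Function.Injective (fun P => ext P (c P)) := by
    intro P P' h
    have := congrArg (fun R => Setoid.comap some R) h
    simpa only [comap_some_ext] using this
  set A := 𝔅.image oneBlock with hA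
  set E := G.image (fun P => ext P (c P)) with hE
  have hAcard : A.card = 𝔅.card := by
    rw [hA, Finset.card_image_of_injOn]
    intro B hB C hC e
    exact oneBlock_injective (h2 B hB) (h2 C hC) e
  have hEcard : E.card = G.card := Finset.card_image_of_injective _ hinj
  have hAone : ∀ P ∈ A, AtMostOne P := by
    intro P hP
    obtain ⟨B, hB, rfl⟩ := Finset.mem_image.1 hP
    exact atMostOne_oneBlock (h2 B hB)
  have hEone : ∀ R ∈ E, ¬ AtMostOne R := by
    intro R hR h
    obtain ⟨P, hP, rfl⟩ := Finset.mem_image.1 hR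
    obtain ⟨a, ha⟩ : ∃ a, ¬ IsSing P a := by
      by_contra! hs
      apply hbot
      have : P = ⊥ := by
        refine Setoid.ext fun x y => ?_
        exact ⟨fun h => (hs x y h).symm, fun h => by cases h; exact P.refl' x⟩
      exact this ▸ hP
    have h1 : ext P (c P) none (some a) := by
      apply h _ _ (not_isSing_ext_none P _)
      intro hs
      apply ha
      intro b hb
      exact Option.some_injective _ (hs (some b) hb)
    have := hc P hP a h1
    exact ha (this ▸ hc P hP)
  have hdisj : Disjoint A E := Finset.disjoint_left.2 fun P hP hP' => hEone P hP' (hAone P hP)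
  obtain ⟨H, hAH, hHE, hHn⟩ := Finset.exists_subsuperset_card_eq
    (Finset.subset_union_left (s₁ := A) (s₂ := E)) (n := n) (by omega)
    (by rw [Finset.card_union_of_disjoint hdisj]; omega)
  refine ⟨H, ?_, ?_, hHn⟩
  · intro τ hτ
    apply asym_oneBlock h2 hasym τ
    intro P hP
    rcases Finset.mem_union.1 (hHE (hτ P (hAH hP))) with h | h
    · exact h
    · exact absurd ((hAone P hP).comap τ) (hEone _ h)
  · intro P hP
    rcases Finset.mem_union.1 (hHE hP) with h | h
    · obtain ⟨B, hB, rfl⟩ := Finset.mem_image.1 h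
      have := hcard B hB
      apply oneBlock_good (Finset.card_pos.1 (by omega)) <;>
        rw [Fintype.card_option, Fintype.card_fin] <;> omega
    · obtain ⟨Q, hQ, rfl⟩ := Finset.mem_image.1 h
      exact ext_good (hG Q hQ) _

end Base

/-! ### Partitions and vertex sets -/

section Cost

open Function

variable {m n : ℕ}

/-- A good partition is the kernel of a labelling of the points by `Fin m` which misses at most one
label. -/
lemma Good.exists_label {α : Type*} [Finite α] {P : Setoid α} (h : Good m P) :
    ∃ f : α → Fin m, Setoid.ker f = P ∧ m ≤ (Set.range f).ncard + 1 := by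
  have : Fintype (Quotient P) := Fintype.ofFinite _
  obtain ⟨e⟩ : Nonempty (Quotient P ↪ Fin m) := by
    apply Function.Embedding.nonempty_of_card_le
    rw [Fintype.card_fin, ← Nat.card_eq_fintype_card]
    exact h.2
  have hk : Setoid.ker (fun a => e (Quotient.mk P a)) = P := by
    refine Setoid.ext fun a b => ?_
    rw [Setoid.ker_def, e.apply_eq_iff_eq]
    exact Quotient.eq
  exact ⟨_, hk, (good_ker.1 (hk.symm ▸ h)).1⟩

lemma perm_eq_one_of_range {α : Type*} {f : α → Fin m} (hf : m ≤ (Set.range f).ncard + 1)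
    {g : Equiv.Perm (Fin m)} (hg : ∀ a, g (f a) = f a) : g = 1 := by
  by_contra hne
  -- a nontrivial permutation moves two points, and both would be missed by `f`
  obtain ⟨x, hx⟩ : ∃ x, g x ≠ x := by
    by_contra! h
    exact hne (Equiv.ext h)
  have hsub : Set.range f ⊆ ((Finset.univ \ {x, g x} : Finset (Fin m)) : Set (Fin m)) := by
    rintro _ ⟨a, rfl⟩
    simp only [Finset.coe_sdiff, Finset.coe_univ, Finset.coe_insert, Finset.coe_singleton,
      Set.mem_sdiff, Set.mem_univ, true_and, Set.mem_insert_iff, Set.mem_singleton_iff, not_or]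
    constructor
    · intro e; exact hx (e ▸ hg a)
    · intro e
      have := hg a
      rw [e] at this
      exact hx (g.injective this)
  have hle := Set.ncard_le_ncard hsub (Finset.finite_toSet _)
  have h2 := Finset.card_le_univ ({x, g x} : Finset (Fin m))
  rw [Set.ncard_coe_finset, Finset.card_sdiff_of_subset (Finset.subset_univ _), Finset.card_univ,
    Finset.card_pair (Ne.symm hx), Fintype.card_fin] at hle
  rw [Finset.card_pair (Ne.symm hx), Fintype.card_fin] at h2
  omega

/-- An asymmetric family of `n` good partitions of `α` gives a color class of size `|α|`: the
coordinates of the vertex belonging to `a` are the labels of the blocks containing `a`. -/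
lemma exists_distClass (hm : 2 ≤ m) {α : Type*} [Fintype α] {H : Finset (Setoid α)} (hH : Asym H)
    (hg : ∀ P ∈ H, Good m P) (hc : H.card = n) :
    ∃ S : Set (Fin n → Fin m), S.ncard = Fintype.card α ∧ IsDistClass (Ham m n) S := by
  classical
  let e := (H.equivFinOfCardEq hc).symm
  choose f hf hr using fun i => (hg _ (e i).2).exists_label
  have hfH : ∀ i, Setoid.ker (f i) ∈ H := fun i => (hf i).symm ▸ (e i).2
  let ρ : α → Fin n → Fin m := fun a i => f i a
  have hker : ∀ P ∈ H, ∃ i, Setoid.ker (f i) = P := fun P hP =>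
    ⟨e.symm ⟨P, hP⟩, by rw [hf]; simp⟩
  -- two points that are in the same block of each partition could be exchanged
  have hρ : Injective ρ := by
    intro a b hab
    have h1 : Equiv.swap a b = 1 := by
      apply hH
      intro P hP
      have : P.comap (Equiv.swap a b) = P := by
        obtain ⟨i, rfl⟩ := hker P hP
        have hs : ∀ x, f i (Equiv.swap a b x) = f i x := by
          intro x
          rw [Equiv.swap_apply_def]
          have := congrFun hab i
          split_ifs with h h
          · rw [h]; exact this.symm
          · rw [h]; exact this
          · rfl
        refine Setoid.ext fun x y => ?_
        change f i _ = f i _ ↔ f i x = f i y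
        rw [hs, hs]
      rw [this]; exact hP
    exact Equiv.swap_eq_one_iff.1 h1
  refine ⟨Set.range ρ, ?_, ?_⟩
  · rw [Set.ncard_range_of_injective hρ, Nat.card_eq_fintype_card]
  · intro φ hφ
    have hτ : ∀ a, ∃ b, ρ b = φ (ρ a) := fun a => (hφ (ρ a)).2 ⟨a, rfl⟩
    choose τ hτ using hτ
    have hτi : Injective τ := by
      intro a b h
      apply hρ
      apply φ.injective
      rw [← hτ, ← hτ, h]
    let τ' : Equiv.Perm α := Equiv.ofBijective τ (Finite.injective_iff_bijective.1 hτi)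
    obtain ⟨d, g, hdg⟩ := ham_structure hm φ
    have hlab : ∀ i a, f (d i) (τ a) = g i (f i a) := by
      intro i a
      rw [← hdg (ρ a) i, ← hτ a]
    have hcomap : ∀ i, (Setoid.ker (f (d i))).comap τ' = Setoid.ker (f i) := by
      intro i
      refine Setoid.ext fun a b => ?_
      change f (d i) (τ a) = f (d i) (τ b) ↔ f i a = f i b
      rw [hlab, hlab, (g i).apply_eq_iff_eq]
    have h1 : τ' = 1 := by
      apply hH
      intro P hP
      obtain ⟨i, rfl⟩ := hker P hP
      have := hcomap (d.symm i)
      rw [Equiv.apply_symm_apply] at this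
      rw [this]
      exact hfH _
    have hτ1 : ∀ a, τ a = a := fun a => congrArg (fun s : Equiv.Perm α => s a) h1
    have hd : ∀ i, d i = i := by
      intro i
      have h2 := hcomap i
      rw [h1, hf, hf] at h2
      exact e.injective (Subtype.ext h2)
    have hg1 : ∀ i, g i = 1 := by
      intro i
      apply perm_eq_one_of_range (hr i)
      intro a
      rw [← hlab, hτ1, hd]
    intro v
    funext i
    have := hdg v i
    rw [hd, hg1] at this
    exact this

lemma cost_le (hm : 2 ≤ m) {α : Type*} [Fintype α] {H : Finset (Setoid α)} (hH : Asym H)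
    (hg : ∀ P ∈ H, Good m P) (hc : H.card = n) : costNum (Ham m n) ≤ Fintype.card α :=
  Nat.sInf_le (exists_distClass hm hH hg hc)

end Cost

section Det

variable {m n : ℕ}

lemma exists_ne_of_two_le (hm : 2 ≤ m) (u : Fin m) : ∃ v, v ≠ u := by
  have : Nontrivial (Fin m) := Fin.nontrivial_iff_two_le.2 hm
  exact exists_ne u

/-- If `S` is determining, each coordinate takes all values but at most one on `S`: otherwise two
missing values could be exchanged. -/
lemma IsDeterminingSet.good_ker {S : Set (Fin n → Fin m)} (hS : IsDeterminingSet (Ham m n) S)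
    (i : Fin n) : Good m (Setoid.ker (fun s : S => s.1 i)) := by
  rw [_root_.good_ker]
  have hfin : (Set.range (fun s : S => s.1 i)).ncard ≤ m := by
    have := Set.ncard_le_card (Set.range (fun s : S => s.1 i))
    rwa [Nat.card_eq_fintype_card, Fintype.card_fin] at this
  refine ⟨?_, hfin⟩
  by_contra! hlt
  have hcompl := Set.ncard_add_ncard_compl (Set.range (fun s : S => s.1 i))
  rw [Nat.card_eq_fintype_card, Fintype.card_fin] at hcompl
  obtain ⟨p, q, hp, hq, hpq⟩ := (Set.one_lt_ncard_iff).1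
    (show 1 < (Set.range (fun s : S => s.1 i))ᶜ.ncard by omega)
  have h := hS (hamIso 1 (Function.update (fun _ => 1) i (Equiv.swap p q))) (by
    intro v hv
    funext j
    rw [hamIso_apply]
    by_cases hj : j = i
    · subst hj
      rw [Function.update_self]
      exact Equiv.swap_apply_of_ne_of_ne (fun e => hp ⟨⟨v, hv⟩, e⟩) (fun e => hq ⟨⟨v, hv⟩, e⟩)
    · rw [Function.update_of_ne hj]; rfl) (fun _ => p)
  have := congrFun h i
  rw [hamIso_apply, Function.update_self, Equiv.swap_apply_left] at this
  exact hpq this.symm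

/-- If `S` is determining, distinct coordinates induce distinct partitions of `S`: otherwise they
could be exchanged, up to relabelling. -/
lemma IsDeterminingSet.ker_injective (hm : 2 ≤ m) {S : Set (Fin n → Fin m)}
    (hS : IsDeterminingSet (Ham m n) S) :
    Function.Injective (fun i => Setoid.ker (fun s : S => s.1 i)) := by
  classical
  intro i j hij
  by_contra hne
  have hk : ∀ s t : S, s.1 i = t.1 i ↔ s.1 j = t.1 j := fun s t => by
    have := congrArg (fun P : Setoid S => P s t) hij
    exact iff_of_eq this
  obtain ⟨π, hπ⟩ : ∃ π : Equiv.Perm (Fin m), ∀ s : S, π (s.1 i) = s.1 j := by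
    have hl : ∀ x : {x : Fin m // ∃ s : S, s.1 i = x}, ∃ y : {y : Fin m // ∃ s : S, s.1 j = y},
        ∀ s : S, s.1 i = x.1 → s.1 j = y.1 := by
      rintro ⟨x, s, rfl⟩
      exact ⟨⟨s.1 j, s, rfl⟩, fun t ht => (hk _ _).1 ht⟩
    choose F hF using hl
    have hFb : Function.Bijective F := by
      constructor
      · rintro ⟨x, s, rfl⟩ ⟨y, t, rfl⟩ h
        have h1 := hF ⟨s.1 i, s, rfl⟩ s rfl
        have h2 := hF ⟨t.1 i, t, rfl⟩ t rfl
        rw [h] at h1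
        exact Subtype.ext ((hk _ _).2 (h1.trans h2.symm))
      · rintro ⟨y, s, rfl⟩
        exact ⟨⟨s.1 i, s, rfl⟩, Subtype.ext (hF ⟨s.1 i, s, rfl⟩ s rfl).symm⟩
    let E := Equiv.ofBijective F hFb
    refine ⟨E.extendSubtype, fun s => ?_⟩
    rw [Equiv.extendSubtype_apply_of_mem E _ ⟨s, rfl⟩]
    exact (hF ⟨s.1 i, s, rfl⟩ s rfl).symm
  set π' : Fin n → Equiv.Perm (Fin m) :=
    Function.update (Function.update (fun _ => 1) i π.symm) j π with hπ'
  have hπi : π' i = π.symm := by simp [hπ', hne]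
  have hπj : π' j = π := by simp [hπ']
  have h := hS (hamIso (Equiv.swap i j) π') (by
    intro v hv
    have hv' := hπ ⟨v, hv⟩
    simp only at hv'
    funext l
    rw [hamIso_apply]
    by_cases hl : l = i
    · rw [hl, hπi, Equiv.swap_apply_left, ← hv', Equiv.symm_apply_apply]
    by_cases hl' : l = j
    · rw [hl', hπj, Equiv.swap_apply_right, hv']
    · rw [Equiv.swap_apply_of_ne_of_ne hl hl']
      simp [hπ', hl, hl'])
  let u : Fin m := ⟨0, by omega⟩
  obtain ⟨w, hw⟩ := exists_ne_of_two_le hm (π u)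
  have := congrFun (h (Function.update (fun _ => u) j w)) j
  rw [hamIso_apply, hπj, Equiv.swap_apply_right, Function.update_self,
    Function.update_of_ne hne] at this
  exact hw this.symm

/-- `n` good partitions of a set of size `det(H(m,n))`. -/
lemma exists_family (hm : 2 ≤ m) {α : Type*} [Fintype α]
    (hα : Fintype.card α = detNum (Ham m n)) :
    ∃ G : Finset (Setoid α), (∀ P ∈ G, Good m P) ∧ G.card = n := by
  classical
  obtain ⟨S, hSc, hS⟩ := Nat.sInf_mem (s := {r | ∃ S : Set (Fin n → Fin m), S.ncard = r ∧
    IsDeterminingSet (Ham m n) S}) ⟨_, Set.univ, rfl, fun φ h v => h v (Set.mem_univ v)⟩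
  obtain ⟨τ⟩ : Nonempty (α ≃ S) := by
    have : Nat.card α = Nat.card S := by
      rw [Nat.card_coe_set_eq, hSc, Nat.card_eq_fintype_card, hα]; rfl
    exact ⟨(Finite.equivFin α).trans ((finCongr this).trans (Finite.equivFin S).symm)⟩
  refine ⟨Finset.univ.image (fun i => (Setoid.ker (fun s : S => s.1 i)).comap τ), ?_, ?_⟩
  · intro P hP
    obtain ⟨i, -, rfl⟩ := Finset.mem_image.1 hP
    exact good_comap τ (hS.good_ker i)
  · have hinj : Function.Injective
        (fun i => (Setoid.ker (fun s : S => s.1 i)).comap τ) :=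
      (comap_equiv_injective τ).comp (hS.ker_injective hm)
    rw [Finset.card_image_of_injective _ hinj, Finset.card_univ, Fintype.card_fin]

/-- A set with fewer than `m` points has at most one good partition, the discrete one. -/
lemma le_detNum (hm : 2 ≤ m) (hn : 2 ≤ n) : m ≤ detNum (Ham m n) := by
  obtain ⟨G, hG, hGc⟩ := exists_family hm (α := Fin (detNum (Ham m n))) (Fintype.card_fin _)
  by_contra! hlt
  have hbot : ∀ P ∈ G, P = ⊥ := by
    intro P hP
    have h1 := (hG P hP).1
    have : Fintype (Quotient P) := Fintype.ofFinite _
    have hinj : Function.Injective (Quotient.mk P) := by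
      have hsurj : Function.Surjective (Quotient.mk P) := Quotient.mk_surjective
      apply ((Fintype.bijective_iff_surjective_and_card _).2 ⟨hsurj, ?_⟩).1
      rw [Fintype.card_fin, ← Nat.card_eq_fintype_card]
      have := Nat.card_le_card_of_surjective _ hsurj
      rw [Nat.card_fin] at this
      omega
    refine Setoid.ext fun x y => ⟨fun h => hinj (Quotient.sound h), fun h => ?_⟩
    cases h
    exact P.refl' x
  have : G.card ≤ 1 := Finset.card_le_one.2 fun P hP Q hQ => (hbot P hP).trans (hbot Q hQ).symm
  omega

/-- A color class of a distinguishing coloring is a determining set. -/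
lemma detNum_le_costNum (h : ∃ S, IsDistClass (Ham m n) S) :
    detNum (Ham m n) ≤ costNum (Ham m n) := by
  obtain ⟨S₀, hS₀⟩ := h
  obtain ⟨S, hSc, hS⟩ := Nat.sInf_mem (s := {r | ∃ S : Set (Fin n → Fin m), S.ncard = r ∧
    IsDistClass (Ham m n) S}) ⟨_, S₀, rfl, hS₀⟩
  refine Nat.sInf_le ⟨S, hSc, fun φ hφ => hS φ fun v => ⟨fun h => ?_, fun h => ?_⟩⟩
  · have := φ.injective (hφ _ h)
    rwa [this] at h
  · rwa [hφ v h]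

end Det

/-! ### The exceptional graph `H(3,2)` -/

/-- Each subset of the vertices of `K₃ □ K₃` is preserved by a non-trivial automorphism. -/
lemma distNum_three_two : distNum (Ham 3 2) ≠ 2 := by
  intro h
  have hne : {d | ∃ c : (Fin 2 → Fin 3) → Fin d, IsDistinguishing (Ham 3 2) c}.Nonempty := by
    apply Nat.nonempty_of_pos_sInf
    change 0 < distNum (Ham 3 2)
    omega
  have hmem := Nat.sInf_mem hne
  change distNum (Ham 3 2) ∈ _ at hmem
  rw [h] at hmem
  obtain ⟨c, hc⟩ := hmem
  let M : Fin 3 → Fin 3 → Bool := fun i j => decide (c ![i, j] = 1)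
  obtain ⟨fl, p, q, hnt, hM⟩ := bool_matrix_symm (M 0 0) (M 0 1) (M 0 2) (M 1 0) (M 1 1) (M 1 2)
    (M 2 0) (M 2 1) (M 2 2)
  have hMM : ![![M 0 0, M 0 1, M 0 2], ![M 1 0, M 1 1, M 1 2], ![M 2 0, M 2 1, M 2 2]] = M := by
    funext i j
    fin_cases i <;> fin_cases j <;> rfl
  rw [hMM] at hM
  have hcM : ∀ {i j k l}, M i j = M k l → c ![i, j] = c ![k, l] := by
    intro i j k l e
    have e' : c ![i, j] = 1 ↔ c ![k, l] = 1 := decide_eq_decide.1 e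
    omega
  have hv : ∀ v : Fin 2 → Fin 3, v = ![v 0, v 1] := fun v => by
    funext i; fin_cases i <;> rfl
  have hid := hc (hamIso (if fl then Equiv.swap 0 1 else 1) ![p, q]) (by
    intro v
    have h1 := hcM (hM (v 0) (v 1))
    rw [← hv v] at h1
    rw [← h1, hv (hamIso _ _ v)]
    cases fl <;> simp)
  cases fl with
  | false =>
    rcases hnt with h | h | h
    · simp at h
    · apply h
      ext1 x
      have := congrFun (hid (fun _ => x)) 0
      simpa using this
    · apply h
      ext1 x
      have := congrFun (hid (fun _ => x)) 1
      simpa using this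
  | true =>
    -- the images of `(0,0)` and `(0,1)` have different first coordinates
    have h1 := congrFun (hid ![0, 0]) 0
    have h2 := congrFun (hid ![0, 1]) 0
    simp at h1 h2
    have := p.injective (h1.trans h2.symm)
    simp at this

/-! ### The bound on the cost -/

open Classical in
/-- On `m` points there are at least `m - 1` good partitions other than the discrete one: those with
a single pair `{0, j}` as non-trivial block. -/
lemma exists_pairs {m : ℕ} (hm : 3 ≤ m) :
    ∃ G : Finset (Setoid (Fin m)), (∀ P ∈ G, Good m P) ∧ ⊥ ∉ G ∧ G.card = m - 1 := by
  let z : Fin m := ⟨0, by omega⟩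
  have hcard : ∀ j ∈ Finset.univ.erase z, ({z, j} : Finset (Fin m)).card = 2 := fun j hj =>
    Finset.card_pair (Finset.ne_of_mem_erase hj).symm
  refine ⟨(Finset.univ.erase z).image (fun j => oneBlock {z, j}), ?_, ?_, ?_⟩
  · intro P hP
    obtain ⟨j, hj, rfl⟩ := Finset.mem_image.1 hP
    have := hcard j hj
    apply oneBlock_good (Finset.card_pos.1 (by omega)) <;> rw [Fintype.card_fin] <;> omega
  · intro h
    obtain ⟨j, hj, h⟩ := Finset.mem_image.1 h
    have h1 : oneBlock {z, j} z j := Or.inr (by simp)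
    rw [h] at h1
    exact Finset.ne_of_mem_erase hj h1.symm
  · rw [Finset.card_image_of_injOn, Finset.card_erase_of_mem (Finset.mem_univ _),
      Finset.card_univ, Fintype.card_fin]
    intro i hi j hj e
    have h1 := oneBlock_injective (hcard i hi).ge (hcard j hj).ge e
    have h2 : i ∈ ({z, j} : Finset (Fin m)) := by rw [← h1]; simp
    simp only [Finset.mem_insert, Finset.mem_singleton] at h2
    exact h2.resolve_left (Finset.ne_of_mem_erase hi)

/-- With `r = det(H(m,n))` points, a core of size `r` is completed to `n` partitions by members of
the family given by a determining set, and one point is added. When `r = m` no core exists, and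
when `n < r` a core of size `n` (if `n > m`) or a family on `m + 1` points is enough. -/
lemma exists_asym {m n : ℕ} (hm : 3 ≤ m) (hn : m ≤ n + 1) (h32 : ¬ (m = 3 ∧ n = 2)) :
    ∃ (α : Type) (_ : Fintype α) (H : Finset (Setoid α)), Asym H ∧ (∀ P ∈ H, Good m P) ∧
      H.card = n ∧ Fintype.card α ≤ detNum (Ham m n) + 1 := by
  classical
  have hr := le_detNum (m := m) (n := n) (by omega) (by omega)
  set r := detNum (Ham m n) with hrdef
  rcases hr.eq_or_lt with hrm | hrm
  · obtain ⟨G, hG, hGc⟩ := exists_family (m := m) (n := n) (by omega) (α := Fin m)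
      (by rw [Fintype.card_fin, ← hrdef, hrm])
    obtain ⟨H, h1, h2, h3⟩ := exists_small hm hn h32 (G := G.erase ⊥)
      (fun P hP => hG P (Finset.mem_of_mem_erase hP)) (Finset.notMem_erase _ _) (by
        have := Finset.pred_card_le_card_erase (s := G) (a := ⊥)
        omega)
    exact ⟨_, inferInstance, H, h1, h2, h3, by rw [Fintype.card_option, Fintype.card_fin]; omega⟩
  rcases Nat.lt_or_ge n r with hnr | hnr
  · rcases Nat.lt_or_ge m n with hmn | hmn
    · obtain ⟨α, _, F, w, hα, hF, hFc⟩ := exists_core hm hmn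
      exact ⟨α, inferInstance, F, hF.asym, hF.good, hFc, by omega⟩
    · obtain ⟨G, hG, hbot, hGc⟩ := exists_pairs hm
      obtain ⟨H, h1, h2, h3⟩ := exists_small hm hn h32 hG hbot (by omega)
      exact ⟨_, inferInstance, H, h1, h2, h3, by
        rw [Fintype.card_option, Fintype.card_fin]; omega⟩
  · obtain ⟨α, _, F, w, hα, hF, hFc⟩ := exists_core hm hrm
    obtain ⟨G, hG, hGc⟩ := exists_family (m := m) (n := n) (by omega) (hα.trans hrdef)
    obtain ⟨H, hFH, hHFG, hHc⟩ := Finset.exists_subsuperset_card_eq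
      (Finset.subset_union_left (s₁ := F) (s₂ := G)) (n := n) (by omega)
      (hGc.symm.le.trans (Finset.card_le_card Finset.subset_union_right))
    obtain ⟨H', h1, h2, h3⟩ := hF.asym_ext (by omega) hFH (fun P hP =>
      (Finset.mem_union.1 (hHFG hP)).elim (hF.good P) (hG P))
    exact ⟨_, inferInstance, H', h1, h2, by omega, by rw [Fintype.card_option, hα]⟩

/-- If `2 ≤ m - 1 ≤ n` and `dist(H(m,n)) = 2`, then
`ρ(H(m,n)) ∈ {det(H(m,n)), det(H(m,n)) + 1}`. -/
theorem stmt7 (m n : ℕ) (h1 : 2 ≤ m - 1) (h2 : m - 1 ≤ n)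
    (hd : distNum (Ham m n) = 2) :
    costNum (Ham m n) = detNum (Ham m n) ∨
      costNum (Ham m n) = detNum (Ham m n) + 1 := by
  have h32 : ¬ (m = 3 ∧ n = 2) := by
    rintro ⟨rfl, rfl⟩
    exact distNum_three_two hd
  obtain ⟨α, _, H, hH, hg, hc, hα⟩ := exists_asym (m := m) (n := n) (by omega) (by omega) h32
  have hle := cost_le (by omega) hH hg hc
  obtain ⟨S, -, hS⟩ := exists_distClass (by omega) hH hg hc
  have := detNum_le_costNum ⟨S, hS⟩
  omega
end

section
/- For n ≥ 4, the distinguishing number of the folded hypercube FQ_n equals 2. -/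
/-- The folded hypercube `FQ_n`: binary `n`-vectors, adjacent iff their Hamming
distance is 1 or `n`. -/
def FQ (n : ℕ) : SimpleGraph (Fin n → ZMod 2) :=
  SimpleGraph.fromRel (fun x y => hammingDist x y = 1 ∨ hammingDist x y = n)

/-! ### Adjacency and directions -/

/-- The connection set of `FQ n` as a Cayley graph on `(ZMod 2)^n`: the unit vectors together with
the all-ones vector. -/
def IsDir {n : ℕ} (a : Fin n → ZMod 2) : Prop :=
  (∃ i, a = Pi.single i 1) ∨ a = 1

lemma zmod2_cases (a : ZMod 2) : a = 0 ∨ a = 1 := by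
  revert a; decide

lemma zmod2_self (a : ZMod 2) : a + a = 0 := by
  revert a; decide

lemma vec_self {n : ℕ} (a : Fin n → ZMod 2) : a + a = 0 := by
  funext i; exact zmod2_self _

lemma vec_add_cancel {n : ℕ} (a b : Fin n → ZMod 2) : a + (a + b) = b := by
  rw [← add_assoc, vec_self, zero_add]

lemma adj_raw {n : ℕ} (hn : 1 ≤ n) (x y : Fin n → ZMod 2) :
    (FQ n).Adj x y ↔ hammingDist x y = 1 ∨ hammingDist x y = n := by
  rw [FQ, SimpleGraph.fromRel_adj, hammingDist_comm y x, or_self]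
  refine ⟨fun h => h.2, fun h => ⟨?_, h⟩⟩
  rintro rfl
  rw [hammingDist_self] at h
  omega

/-- Adjacent vertices differ in exactly one coordinate or in all of them. -/
lemma adj_diff {n : ℕ} (hn : 1 ≤ n) (x y : Fin n → ZMod 2) :
    (FQ n).Adj x y ↔ (∃ i, ∀ j, x j ≠ y j ↔ j = i) ∨ ∀ j, x j ≠ y j := by
  rw [adj_raw hn]
  refine or_congr ?_ ?_
  · rw [hammingDist, Finset.card_eq_one]
    refine exists_congr fun i => ?_
    simp [Finset.ext_iff]
  · conv_lhs => rhs; rw [← Fintype.card_fin n]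
    rw [hammingDist, Finset.card_eq_iff_eq_univ]
    simp [Finset.ext_iff]

lemma adj_iff {n : ℕ} (hn : 1 ≤ n) (x y : Fin n → ZMod 2) :
    (FQ n).Adj x y ↔ IsDir (x + y) := by
  rw [adj_diff hn, IsDir]
  have key : ∀ a b c : ZMod 2, (c = 1 → (a ≠ b ↔ a + b = c)) ∧ (c = 0 → (¬ a ≠ b ↔ a + b = c)) := by
    decide
  refine or_congr (exists_congr fun i => ?_) ?_
  · rw [funext_iff]
    refine forall_congr' fun j => ?_
    by_cases h : j = i
    · subst h
      simp only [iff_true, Pi.add_apply, Pi.single_eq_same]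
      exact (key _ _ _).1 rfl
    · simp only [h, iff_false, Pi.add_apply, Pi.single_eq_of_ne h]
      exact (key _ _ _).2 rfl
  · rw [funext_iff]
    exact forall_congr' fun j => (key _ _ _).1 rfl

/-- The sum of two distinct directions determines the pair: this is where `n ≥ 4` is needed, since
for `n = 3` the four directions sum to zero. -/
lemma dir_unique {n : ℕ} (hn : 4 ≤ n) {a b c d : Fin n → ZMod 2} (ha : IsDir a) (hb : IsDir b)
    (hc : IsDir c) (hd : IsDir d) (h : a + c = b + d) (hac : a ≠ c) : a = b ∨ a = d := by
  -- a coordinate avoiding three given ones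
  have avoid : ∀ i j k : Fin n, ∃ l, l ≠ i ∧ l ≠ j ∧ l ≠ k := by
    intro i j k
    have : ∃ l ∈ (Finset.univ : Finset (Fin n)), l ∉ ({i, j, k} : Finset (Fin n)) := by
      apply Finset.exists_mem_notMem_of_card_lt_card
      have := Finset.card_le_three (a := i) (b := j) (c := k)
      simp only [Finset.card_univ, Fintype.card_fin]
      omega
    obtain ⟨l, -, hl⟩ := this
    simp only [Finset.mem_insert, Finset.mem_singleton, not_or] at hl
    exact ⟨l, hl⟩
  rcases ha with ⟨i, rfl⟩ | rfl
  · rcases hc with ⟨k, rfl⟩ | rfl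
    · rcases hb with ⟨j, rfl⟩ | rfl
      · rcases hd with ⟨l, rfl⟩ | rfl
        · have hik : i ≠ k := fun e => hac (by rw [e])
          have := congrFun h i
          by_contra! hne
          have h1 : i ≠ j := fun e => hne.1 (by rw [e])
          have h2 : i ≠ l := fun e => hne.2 (by rw [e])
          simp [hik, h1, h2] at this
        · obtain ⟨l, h1, h2, h3⟩ := avoid i j k
          have := congrFun h l
          simp [h1, h2, h3] at this
      · rcases hd with ⟨l, rfl⟩ | rfl
        · obtain ⟨m, h1, h2, h3⟩ := avoid i k l
          have := congrFun h m
          simp [h1, h2, h3] at this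
        · rw [vec_self] at h
          exact absurd (by rw [← vec_add_cancel (Pi.single i 1) (Pi.single k 1), h, add_zero]) hac
    · rcases hb with ⟨j, rfl⟩ | rfl
      · rcases hd with ⟨l, rfl⟩ | rfl
        · obtain ⟨m, h1, h2, h3⟩ := avoid i j l
          have := congrFun h m
          simp [h1, h2, h3] at this
        · left; exact add_right_cancel h
      · right
        rw [add_comm] at h
        exact add_left_cancel h
  · rcases hb with ⟨j, rfl⟩ | rfl
    · rcases hd with ⟨l, rfl⟩ | rfl
      · rcases hc with ⟨k, rfl⟩ | rfl
        · obtain ⟨m, h1, h2, h3⟩ := avoid j k l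
          have := congrFun h m
          simp [h1, h2, h3] at this
        · exact absurd rfl hac
      · right; rfl
    · left; rfl

/-- Every vector is reached from the origin by adding unit vectors. -/
lemma vec_induction {n : ℕ} {p : (Fin n → ZMod 2) → Prop} (h0 : p 0)
    (hs : ∀ x i, p x → p (x + Pi.single i 1)) (x : Fin n → ZMod 2) : p x := by
  rw [← Finset.univ_sum_single x]
  induction (Finset.univ : Finset (Fin n)) using Finset.induction_on with
  | empty => simpa using h0
  | insert i s his ih =>
    rw [Finset.sum_insert his, add_comm]
    rcases zmod2_cases (x i) with h | h
    · rw [h, Pi.single_zero, add_zero]; exact ih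
    · rw [h]; exact hs _ _ ih

/-! ### Automorphisms are affine -/

/-- Opposite edges of a quadrangle are mapped to parallel edges: the quadrangle
`x, x + a, x + a + b, x + b` is sent to a quadrangle, and by `dir_unique` these are parallelograms. -/
lemma parallel {n : ℕ} (hn : 4 ≤ n) (φ : FQ n ≃g FQ n) {a b : Fin n → ZMod 2} (ha : IsDir a)
    (hb : IsDir b) (x : Fin n → ZMod 2) :
    φ (x + b + a) + φ (x + b) = φ (x + a) + φ x := by
  have h1 : 1 ≤ n := by omega
  by_cases hab : a = b
  · subst hab
    rw [add_assoc x a a, vec_self, add_zero, add_comm]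
  have edge : ∀ y c, IsDir c → IsDir (φ y + φ (y + c)) := by
    intro y c hc
    rw [← adj_iff h1, φ.map_adj_iff, adj_iff h1, vec_add_cancel]
    exact hc
  have e1 := edge x a ha
  have e2 := edge x b hb
  have e3 := edge (x + b) a ha
  have e4 := edge (x + a) b hb
  have hcomm : x + a + b = x + b + a := add_right_comm _ _ _
  rw [hcomm] at e4
  have hsum : (φ x + φ (x + a)) + (φ (x + a) + φ (x + b + a))
      = (φ x + φ (x + b)) + (φ (x + b) + φ (x + b + a)) := by
    rw [add_assoc (φ x), add_assoc (φ x), vec_add_cancel, vec_add_cancel]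
  have hne : φ x + φ (x + a) ≠ φ (x + a) + φ (x + b + a) := by
    intro h
    rw [add_comm (φ x)] at h
    have h2 := φ.injective (add_left_cancel h)
    rw [add_assoc] at h2
    have h3 : b + a = 0 := by simpa using h2.symm
    apply hab
    rw [← vec_add_cancel b a, h3, add_zero]
  rcases dir_unique hn e1 e2 e4 e3 hsum hne with h | h
  · exact absurd (add_left_cancel (φ.injective (add_left_cancel h))) hab
  · rw [add_comm (φ (x + b + a)), add_comm (φ (x + a))]
    exact h.symm

/-- Automorphisms fixing the origin are additive in the direction of an edge: by `parallel`, the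
increment along `a` does not depend on the base point. -/
lemma map_add_dir {n : ℕ} (hn : 4 ≤ n) (φ : FQ n ≃g FQ n) (h0 : φ 0 = 0)
    {a : Fin n → ZMod 2} (ha : IsDir a) (x : Fin n → ZMod 2) : φ (x + a) = φ x + φ a := by
  have : φ (x + a) + φ x = φ a := by
    induction x using vec_induction with
    | h0 => rw [h0, zero_add, add_zero]
    | hs x i ih => rw [parallel hn φ ha (Or.inl ⟨i, rfl⟩), ih]
  rw [← this, add_comm (φ (x + a)), vec_add_cancel]

lemma eq_id_of_fix {n : ℕ} (hn : 4 ≤ n) (φ : FQ n ≃g FQ n) (h0 : φ 0 = 0)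
    (he : ∀ i, φ (Pi.single i 1) = Pi.single i 1) (x : Fin n → ZMod 2) : φ x = x := by
  induction x using vec_induction with
  | h0 => exact h0
  | hs x i ih => rw [map_add_dir hn φ h0 (Or.inl ⟨i, rfl⟩), ih, he]

/-! ### Recognising vertices inside an invariant set -/

/-- `v` has at most one `G`-neighbour in `S \ T`. -/
def AtMostOneNbr {V : Type*} (G : SimpleGraph V) (S T : Set V) (v : V) : Prop :=
  ∀ a ∈ S, ∀ b ∈ S, a ∉ T → b ∉ T → G.Adj v a → G.Adj v b → a = b

/-- The property is invariant under automorphisms preserving `S` and fixing `T` pointwise. -/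
lemma AtMostOneNbr.map {V : Type*} {G : SimpleGraph V} {S T : Set V} (φ : G ≃g G)
    (hS : ∀ v, φ v ∈ S ↔ v ∈ S) (hT : ∀ v ∈ T, φ v = v) {v : V} (h : AtMostOneNbr G S T v) :
    AtMostOneNbr G S T (φ v) := by
  have key : ∀ a ∈ S, a ∉ T → G.Adj (φ v) a →
      φ.symm a ∈ S ∧ φ.symm a ∉ T ∧ G.Adj v (φ.symm a) := by
    intro a ha haT hadj
    refine ⟨?_, ?_, ?_⟩
    · rw [← hS, φ.apply_symm_apply]; exact ha
    · intro hm
      have := hT _ hm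
      rw [φ.apply_symm_apply] at this
      exact haT (this ▸ hm)
    · rw [← φ.map_adj_iff, φ.apply_symm_apply]; exact hadj
  intro a ha b hb haT hbT hva hvb
  obtain ⟨a1, a2, a3⟩ := key a ha haT hva
  obtain ⟨b1, b2, b3⟩ := key b hb hbT hvb
  exact φ.symm.injective (h _ a1 _ b1 a2 b2 a3 b3)

/-! ### A distinguishing class for dimension at least five -/

/-- The vector `1…10…0` with `k` leading ones. For `k = 0, …, n` these form an induced cycle. -/
def stair (n k : ℕ) : Fin n → ZMod 2 := fun i => if i.val < k then 1 else 0

lemma stair_zero (n : ℕ) : stair n 0 = 0 := by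
  funext i; simp [stair]

lemma stair_inj {n k l : ℕ} (hk : k ≤ n) (hl : l ≤ n) (h : stair n k = stair n l) : k = l := by
  by_contra hne
  wlog hlt : k < l generalizing k l
  · exact this hl hk h.symm (Ne.symm hne) (by omega)
  have := congrFun h ⟨k, by omega⟩
  simp [stair, hlt] at this

lemma stair_ne_iff {n : ℕ} (k l : ℕ) (j : Fin n) :
    stair n k j ≠ stair n l j ↔ (k ≤ j.val ∧ j.val < l) ∨ (l ≤ j.val ∧ j.val < k) := by
  unfold stair
  split_ifs <;> simp only [ne_eq, not_true_eq_false, one_ne_zero, zero_ne_one, not_false_eq_true,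
    false_iff, true_iff] <;> omega

lemma stair_adj {n k l : ℕ} (hn : 3 ≤ n) (hk : k ≤ n) (hl : l ≤ n) :
    (FQ n).Adj (stair n k) (stair n l) ↔
      k + 1 = l ∨ l + 1 = k ∨ (k = 0 ∧ l = n) ∨ (k = n ∧ l = 0) := by
  rw [adj_diff (by omega)]
  simp only [stair_ne_iff]
  constructor
  · wlog hlt : k ≤ l generalizing k l
    · intro h
      have := this hl hk (by omega) (by simpa only [or_comm] using h)
      omega
    rintro (⟨i, hi⟩ | h)
    · have h1 := (hi i).2 rfl
      by_contra hc
      have h2 := (hi ⟨k, by omega⟩).1 (Or.inl ⟨le_rfl, by simp; omega⟩)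
      have h3 := (hi ⟨k + 1, by omega⟩).1 (Or.inl ⟨by simp, by simp; omega⟩)
      have h4 := h2.trans h3.symm
      simp at h4
    · have h1 := h ⟨0, by omega⟩
      have h2 := h ⟨n - 1, by omega⟩
      simp only at h1 h2
      omega
  · rintro (rfl | rfl | ⟨rfl, rfl⟩ | ⟨rfl, rfl⟩)
    · exact Or.inl ⟨⟨k, by omega⟩, fun j => by rw [Fin.ext_iff]; simp only; omega⟩
    · exact Or.inl ⟨⟨l, by omega⟩, fun j => by rw [Fin.ext_iff]; simp only; omega⟩
    · exact Or.inr fun j => by omega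
    · exact Or.inr fun j => by omega

lemma stair_succ {n k : ℕ} (hk : k < n) : stair n (k + 1) = stair n k + Pi.single ⟨k, hk⟩ 1 := by
  funext j
  rw [Pi.add_apply, Pi.single_apply]
  by_cases h : j = ⟨k, hk⟩
  · subst h; simp [stair]
  · have : j.val ≠ k := fun e => h (Fin.ext e)
    simp only [stair, h, if_false, add_zero]
    congr 1
    simp only [eq_iff_iff]
    omega

lemma single_adj_stair {n k : ℕ} (hn : 5 ≤ n) (hk : k ≤ n) :
    (FQ n).Adj (Pi.single ⟨2, by omega⟩ 1) (stair n k) ↔ k = 0 := by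
  have hd : ∀ j : Fin n, (Pi.single ⟨2, by omega⟩ 1 : Fin n → ZMod 2) j ≠ stair n k j ↔
      (j.val = 2 ∧ k ≤ 2) ∨ (j.val ≠ 2 ∧ j.val < k) := by
    intro j
    simp only [Pi.single_apply, Fin.ext_iff, stair]
    split_ifs <;> simp <;> omega
  rw [adj_diff (by omega)]
  simp only [hd]
  constructor
  · rintro (⟨i, hi⟩ | h)
    · by_contra hc
      have hi' : ∀ m (_ : m < n), ((m = 2 ∧ k ≤ 2) ∨ (m ≠ 2 ∧ m < k)) → m = i.val :=
        fun m hm h => Fin.ext_iff.1 ((hi ⟨m, hm⟩).1 h)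
      have h1 := hi' 0 (by omega) (by omega)
      by_cases hk1 : k = 1
      · have h2 := hi' 2 (by omega) (by omega)
        omega
      · have h2 := hi' 1 (by omega) (by omega)
        omega
    · have h1 := h ⟨2, by omega⟩
      have h2 := h ⟨3, by omega⟩
      simp only at h1 h2
      omega
  · rintro rfl
    exact Or.inl ⟨⟨2, by omega⟩, fun j => by rw [Fin.ext_iff]; simp only; omega⟩

/-- For `n ≥ 5`: the staircase cycle with one pendant vertex, the third unit vector, attached at
the origin. -/
def stairClass (n : ℕ) (hn : 5 ≤ n) : Set (Fin n → ZMod 2) :=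
  {x | (∃ k ≤ n, x = stair n k) ∨ x = Pi.single ⟨2, by omega⟩ 1}

lemma isDistClass_stairClass {n : ℕ} (hn : 5 ≤ n) : IsDistClass (FQ n) (stairClass n hn) := by
  intro φ hS
  set w : Fin n → ZMod 2 := Pi.single ⟨2, by omega⟩ 1 with hw
  have hwS : w ∈ stairClass n hn := Or.inr rfl
  have hPS : ∀ k ≤ n, stair n k ∈ stairClass n hn := fun k hk => Or.inl ⟨k, hk, rfl⟩
  have hwadj : ∀ k ≤ n, ((FQ n).Adj w (stair n k) ↔ k = 0) := fun k hk => single_adj_stair hn hk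
  have hwP : ∀ k ≤ n, w ≠ stair n k := by
    intro k hk e
    have h0 := congrFun e ⟨0, by omega⟩
    have h2 := congrFun e ⟨2, by omega⟩
    simp only [hw, stair, Pi.single_apply, Fin.ext_iff] at h0 h2
    rw [if_neg (by omega)] at h0
    rw [if_pos trivial] at h2
    split_ifs at h0 h2
    · exact zero_ne_one h0
    · exact zero_ne_one h0
    · omega
    · exact one_ne_zero h2
  -- the pendant vertex is the only one with a single neighbour in the class
  have hφw : φ w = w := by
    have hU : AtMostOneNbr (FQ n) (stairClass n hn) ∅ w := by
      have : ∀ a ∈ stairClass n hn, (FQ n).Adj w a → a = stair n 0 := by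
        rintro a (⟨k, hk, rfl⟩ | rfl) hadj
        · rw [(hwadj k hk).1 hadj]
        · exact absurd rfl hadj.ne
      intro a ha b hb _ _ h1 h2
      rw [this a ha h1, this b hb h2]
    have hU' := hU.map φ hS (by simp)
    rcases (hS w).2 hwS with ⟨k, hk, e⟩ | e
    · rw [e] at hU'
      exfalso
      have two : ∀ p q, p ≤ n → q ≤ n → p ≠ q → (FQ n).Adj (stair n k) (stair n p) →
          (FQ n).Adj (stair n k) (stair n q) → False := fun p q hp hq hne h1 h2 =>
        hne (stair_inj hp hq (hU' _ (hPS p hp) _ (hPS q hq) (by simp) (by simp) h1 h2))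
      by_cases hk0 : k = 0
      · exact two 1 n (by omega) le_rfl (by omega)
          ((stair_adj (by omega) hk (by omega)).2 (by omega))
          ((stair_adj (by omega) hk (by omega)).2 (by omega))
      · by_cases hkn : k = n
        · exact two 0 (n - 1) (by omega) (by omega) (by omega)
            ((stair_adj (by omega) hk (by omega)).2 (by omega))
            ((stair_adj (by omega) hk (by omega)).2 (by omega))
        · exact two (k - 1) (k + 1) (by omega) (by omega) (by omega)
            ((stair_adj (by omega) hk (by omega)).2 (by omega))
            ((stair_adj (by omega) hk (by omega)).2 (by omega))
    · exact e
  -- the images of cycle vertices are cycle vertices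
  have img : ∀ k ≤ n, ∃ l ≤ n, φ (stair n k) = stair n l := by
    intro k hk
    rcases (hS _).2 (hPS k hk) with h | h
    · exact h
    · exact absurd (φ.injective (hφw.trans h.symm)) (hwP k hk)
  -- the map `k ↦ l` on indices preserves and reflects adjacency in the cycle
  have step : ∀ k l p q, k ≤ n → l ≤ n → p ≤ n → q ≤ n → φ (stair n k) = stair n l →
      φ (stair n p) = stair n q →
      ((k + 1 = p ∨ p + 1 = k ∨ (k = 0 ∧ p = n) ∨ (k = n ∧ p = 0)) ↔
        (l + 1 = q ∨ q + 1 = l ∨ (l = 0 ∧ q = n) ∨ (l = n ∧ q = 0))) := by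
    intro k l p q hk hl hp hq h1 h2
    rw [← stair_adj (by omega) hk hp, ← stair_adj (by omega) hl hq, ← h1, ← h2, φ.map_adj_iff]
  have inj : ∀ k l p, k ≤ n → p ≤ n → φ (stair n k) = stair n l → φ (stair n p) = stair n l →
      k = p := fun k l p hk hp h1 h2 => stair_inj hk hp (φ.injective (h1.trans h2.symm))
  have hφ0 : φ (stair n 0) = stair n 0 := by
    obtain ⟨l, hl, e⟩ := img 0 (by omega)
    have : (FQ n).Adj w (stair n l) := by
      rw [← hφw, ← e, φ.map_adj_iff]
      exact (hwadj 0 (by omega)).2 rfl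
    rw [e, (hwadj l hl).1 this]
  have h0 : φ 0 = 0 := by rw [← stair_zero]; exact hφ0
  obtain ⟨l₁, hl₁, e₁⟩ := img 1 (by omega)
  obtain ⟨l₂, hl₂, e₂⟩ := img 2 (by omega)
  obtain ⟨l₃, hl₃, e₃⟩ := img 3 (by omega)
  have s01 := step 0 0 1 l₁ (by omega) (by omega) (by omega) hl₁ hφ0 e₁
  have s12 := step 1 l₁ 2 l₂ (by omega) hl₁ (by omega) hl₂ e₁ e₂
  have s23 := step 2 l₂ 3 l₃ (by omega) hl₂ (by omega) hl₃ e₂ e₃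
  have n02 : l₂ ≠ 0 := fun e => by have := inj 0 0 2 (by omega) (by omega) hφ0 (e ▸ e₂); omega
  have n13 : l₃ ≠ l₁ := fun e => by have := inj 1 l₁ 3 (by omega) (by omega) e₁ (e ▸ e₃); omega
  have hl1 : l₁ = 1 := by
    by_contra hne
    -- otherwise the cycle is reflected and the third edge changes direction
    obtain rfl : l₁ = n := by omega
    have hq2 : l₂ = l₁ - 1 := by omega
    have hq3 : l₃ = l₁ - 2 := by omega
    subst hq2 hq3
    rw [stair_succ (by omega : 2 < l₁), map_add_dir (by omega) φ h0 (Or.inl ⟨_, rfl⟩), e₂,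
      hφw] at e₃
    have := congrFun e₃ ⟨l₁ - 2, by omega⟩
    simp only [hw, stair, Pi.add_apply, Pi.single_apply, Fin.ext_iff] at this
    rw [if_pos (by omega), if_neg (by omega), if_neg (by omega)] at this
    simp at this
  subst hl1
  have fixall : ∀ k, k + 1 ≤ n → φ (stair n k) = stair n k ∧
      φ (stair n (k + 1)) = stair n (k + 1) := by
    intro k
    induction k with
    | zero => exact fun _ => ⟨hφ0, e₁⟩
    | succ k ih =>
      intro hk
      obtain ⟨f1, f2⟩ := ih (by omega)
      obtain ⟨l, hl, e⟩ := img (k + 1 + 1) hk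
      have s := step _ _ _ l (by omega) (by omega) hk hl f2 e
      have hne : l ≠ k := fun h => by
        have := inj k k (k + 1 + 1) (by omega) hk f1 (h ▸ e); omega
      obtain rfl : l = k + 1 + 1 := by omega
      exact ⟨f2, e⟩
  refine eq_id_of_fix (by omega) φ h0 fun i => ?_
  obtain ⟨f1, f2⟩ := fixall i.val i.isLt
  rw [stair_succ i.isLt, map_add_dir (by omega) φ h0 (Or.inl ⟨_, rfl⟩), f1] at f2
  exact add_left_cancel f2

/-! ### A distinguishing class in dimension four -/

/-- For `n = 4`: eight vertices inducing an asymmetric graph. -/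
def fourClass : Finset (Fin 4 → ZMod 2) :=
  {![0,0,0,0], ![1,0,0,0], ![0,1,0,0], ![1,1,0,0], ![0,0,1,0], ![1,0,1,0], ![0,0,0,1], ![1,1,0,1]}

/-- `AtMostOneNbr (FQ 4) fourClass T v` in a form that can be decided by evaluation. -/
def FewNbrs (T : Finset (Fin 4 → ZMod 2)) (v : Fin 4 → ZMod 2) : Prop :=
  ∀ a ∈ fourClass, ∀ b ∈ fourClass, a ∉ T → b ∉ T →
    (hammingDist v a = 1 ∨ hammingDist v a = 4) → (hammingDist v b = 1 ∨ hammingDist v b = 4) →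
      a = b

instance (T : Finset (Fin 4 → ZMod 2)) (v : Fin 4 → ZMod 2) : Decidable (FewNbrs T v) := by
  unfold FewNbrs; infer_instance

lemma isDistClass_fourClass : IsDistClass (FQ 4) (fourClass : Set (Fin 4 → ZMod 2)) := by
  intro φ hS
  have hadj := fun x y => adj_raw (n := 4) (by omega) x y
  have hmem : ∀ v ∈ fourClass, φ v ∈ fourClass := fun v hv => (hS v).2 hv
  have hmap : ∀ x y, (hammingDist x y = 1 ∨ hammingDist x y = 4) →
      (hammingDist (φ x) (φ y) = 1 ∨ hammingDist (φ x) (φ y) = 4) := by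
    intro x y h
    rw [← hadj] at h ⊢
    exact φ.map_adj_iff.2 h
  have one : ∀ (T : Finset (Fin 4 → ZMod 2)) (v : Fin 4 → ZMod 2), (∀ v ∈ T, φ v = v) →
      FewNbrs T v → FewNbrs T (φ v) := by
    intro T v hT h
    have := AtMostOneNbr.map (G := FQ 4) (S := fourClass) (T := T) φ hS hT (v := v)
    simp only [AtMostOneNbr, hadj, Finset.mem_coe] at this
    exact this h
  -- the unique vertex with one neighbour in the class
  have f8 : φ ![0,0,0,1] = ![0,0,0,1] := by
    have h := one ∅ ![0,0,0,1] (by simp) (by decide)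
    have hm := hmem ![0,0,0,1] (by decide)
    generalize φ ![0,0,0,1] = z at h hm
    revert z; decide
  have f0 : φ ![0,0,0,0] = ![0,0,0,0] := by
    have h := hmap ![0,0,0,1] ![0,0,0,0] (by decide)
    have hm := hmem ![0,0,0,0] (by decide)
    rw [f8] at h
    generalize φ ![0,0,0,0] = z at h hm
    revert z; decide
  -- the unique neighbour of the origin with exactly one further neighbour in the class
  have f2 : φ ![0,1,0,0] = ![0,1,0,0] := by
    have h := one {![0,0,0,0]} ![0,1,0,0] (by simp [f0]) (by decide)
    have ha := hmap ![0,0,0,0] ![0,1,0,0] (by decide)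
    have hm := hmem ![0,1,0,0] (by decide)
    have hne : φ ![0,1,0,0] ≠ ![0,0,0,1] := by
      rw [← f8]; exact φ.injective.ne (by decide)
    rw [f0] at ha
    generalize φ ![0,1,0,0] = z at h ha hm hne
    revert z; decide
  -- the other neighbour of the vertex just fixed
  have f3 : φ ![1,1,0,0] = ![1,1,0,0] := by
    have ha := hmap ![0,1,0,0] ![1,1,0,0] (by decide)
    have hm := hmem ![1,1,0,0] (by decide)
    have hne : φ ![1,1,0,0] ≠ ![0,0,0,0] := by
      rw [← f0]; exact φ.injective.ne (by decide)
    rw [f2] at ha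
    generalize φ ![1,1,0,0] = z at ha hm hne
    revert z; decide
  -- the remaining common neighbour of two fixed vertices
  have f1 : φ ![1,0,0,0] = ![1,0,0,0] := by
    have ha := hmap ![0,0,0,0] ![1,0,0,0] (by decide)
    have hb := hmap ![1,1,0,0] ![1,0,0,0] (by decide)
    have hm := hmem ![1,0,0,0] (by decide)
    have hne : φ ![1,0,0,0] ≠ ![0,1,0,0] := by
      rw [← f2]; exact φ.injective.ne (by decide)
    rw [f0] at ha
    rw [f3] at hb
    generalize φ ![1,0,0,0] = z at ha hb hm hne
    revert z; decide
  -- the only neighbour of the origin left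
  have f4 : φ ![0,0,1,0] = ![0,0,1,0] := by
    have ha := hmap ![0,0,0,0] ![0,0,1,0] (by decide)
    have hm := hmem ![0,0,1,0] (by decide)
    have hne : φ ![0,0,1,0] ≠ ![0,1,0,0] := by
      rw [← f2]; exact φ.injective.ne (by decide)
    have hne' : φ ![0,0,1,0] ≠ ![1,0,0,0] := by
      rw [← f1]; exact φ.injective.ne (by decide)
    have hne'' : φ ![0,0,1,0] ≠ ![0,0,0,1] := by
      rw [← f8]; exact φ.injective.ne (by decide)
    rw [f0] at ha
    generalize φ ![0,0,1,0] = z at ha hm hne hne' hne''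
    revert z; decide
  refine eq_id_of_fix le_rfl φ ?_ fun i => ?_
  · rw [show (0 : Fin 4 → ZMod 2) = ![0,0,0,0] by decide]; exact f0
  · fin_cases i
    · exact (show (Pi.single 0 1 : Fin 4 → ZMod 2) = ![1,0,0,0] by decide) ▸ f1
    · exact (show (Pi.single 1 1 : Fin 4 → ZMod 2) = ![0,1,0,0] by decide) ▸ f2
    · exact (show (Pi.single 2 1 : Fin 4 → ZMod 2) = ![0,0,1,0] by decide) ▸ f4
    · exact (show (Pi.single 3 1 : Fin 4 → ZMod 2) = ![0,0,0,1] by decide) ▸ f8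

/-! ### The distinguishing number -/

lemma exists_isDistClass {n : ℕ} (hn : 4 ≤ n) : ∃ S, IsDistClass (FQ n) S := by
  rcases Nat.lt_or_ge 4 n with h | h
  · exact ⟨_, isDistClass_stairClass h⟩
  · obtain rfl : n = 4 := by omega
    exact ⟨_, isDistClass_fourClass⟩

/-- Translation by the all-ones vector. -/
def transOne (n : ℕ) : FQ n ≃g FQ n where
  toEquiv := Equiv.addRight 1
  map_rel_iff' := by
    intro x y
    simp [FQ, SimpleGraph.fromRel_adj, hammingDist]

/-- For `n ≥ 4`, the distinguishing number of the folded hypercube is 2. -/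
theorem stmt14 (n : ℕ) (hn : 4 ≤ n) : distNum (FQ n) = 2 := by
  classical
  obtain ⟨S, hS⟩ := exists_isDistClass hn
  have hmem : 2 ∈ {d | ∃ c : (Fin n → ZMod 2) → Fin d, IsDistinguishing (FQ n) c} := by
    refine ⟨fun v => if v ∈ S then 1 else 0, fun φ hφ => hS φ fun v => ?_⟩
    have := hφ v
    simp only at this
    split_ifs at this with h1 h2 h2 <;> simp_all
  refine le_antisymm (Nat.sInf_le hmem) (le_csInf ⟨2, hmem⟩ ?_)
  rintro d ⟨c, hc⟩
  by_contra hd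
  -- with at most one colour, every automorphism preserves the colouring
  have : Subsingleton (Fin d) := Fin.subsingleton_iff_le_one.2 (by omega)
  have h := congrFun (hc (transOne n) (fun v => Subsingleton.elim _ _) 0) ⟨0, by omega⟩
  simp [transOne] at h
end

section
/- For n ≥ 2 and 1 ≤ k ≤ n−1, the determining number of the enhanced hypercube satisfies det(Q_{n,k}) = max{det(Q_{k−1}), det(FQ_{n−k+1})}. -/
/-- The hypercube `Q_n`: vertices are binary `n`-vectors, adjacent iff they
differ in exactly one position. -/
def Qcube (n : ℕ) : SimpleGraph (Fin n → ZMod 2) :=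
  SimpleGraph.fromRel (fun x y => hammingDist x y = 1)

/-- The enhanced hypercube `Q_{n,k}`: hypercube edges, plus an edge between `x`
and `y` whenever they agree in positions `1, …, k-1` and differ in positions
`k, …, n` (positions are 1-indexed). -/
def EQ (n k : ℕ) : SimpleGraph (Fin n → ZMod 2) :=
  SimpleGraph.fromRel (fun x y => hammingDist x y = 1 ∨
    ((∀ i : Fin n, (i : ℕ) + 1 < k → x i = y i) ∧
     (∀ i : Fin n, k ≤ (i : ℕ) + 1 → x i ≠ y i)))

/-! ### Determining numbers -/

lemma exists_detNum {V : Type*} (G : SimpleGraph V) :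
    ∃ S : Set V, S.ncard = detNum G ∧ IsDeterminingSet G S :=
  Nat.sInf_mem (s := {r | ∃ S : Set V, S.ncard = r ∧ IsDeterminingSet G S})
    ⟨_, Set.univ, rfl, fun _ h v => h v trivial⟩

lemma detNum_le {V : Type*} {G : SimpleGraph V} {S : Set V} (h : IsDeterminingSet G S) :
    detNum G ≤ S.ncard :=
  Nat.sInf_le ⟨S, rfl, h⟩

lemma detNum_le_of_iso {V W : Type*} {G : SimpleGraph V} {H : SimpleGraph W} (e : G ≃g H) :
    detNum H ≤ detNum G := by
  obtain ⟨S, hS, hd⟩ := exists_detNum G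
  have h : IsDeterminingSet H (e '' S) := by
    intro φ hφ w
    have h1 := hd ((e.trans φ).trans e.symm) (fun v hv => by
      simp [hφ (e v) ⟨v, hv, rfl⟩]) (e.symm w)
    have h2 := congrArg e h1
    simpa using h2
  calc detNum H ≤ (e '' S).ncard := detNum_le h
    _ = detNum G := by rw [Set.ncard_image_of_injective _ e.injective, hS]

lemma detNum_congr {V W : Type*} {G : SimpleGraph V} {H : SimpleGraph W} (e : G ≃g H) :
    detNum G = detNum H :=
  le_antisymm (detNum_le_of_iso e.symm) (detNum_le_of_iso e)

/-- The product of two graph automorphisms, acting on the Cartesian product. -/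
def prodIso {V W : Type*} {G : SimpleGraph V} {H : SimpleGraph W} (α : G ≃g G) (β : H ≃g H) :
    G.boxProd H ≃g G.boxProd H where
  toEquiv := Equiv.prodCongr α.toEquiv β.toEquiv
  map_rel_iff' := by
    rintro ⟨a, b⟩ ⟨a', b'⟩
    change (G.boxProd H).Adj (α a, β b) (α a', β b') ↔ _
    simp [SimpleGraph.boxProd_adj, α.map_adj_iff, β.map_adj_iff]

lemma exists_fin_cover {V : Type*} [Finite V] [Nonempty V] (S : Set V) (r : ℕ)
    (h : S.ncard ≤ r) : ∃ f : Fin r → V, S ⊆ Set.range f := by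
  classical
  have e : S ≃ Fin S.ncard := Finite.equivFin S
  refine ⟨fun i => if hi : (i : ℕ) < S.ncard then (e.symm ⟨i, hi⟩ : V)
    else Classical.arbitrary V, fun v hv => ?_⟩
  refine ⟨⟨e ⟨v, hv⟩, (e ⟨v, hv⟩).2.trans_le h⟩, ?_⟩
  simp

/-- If all automorphisms of `G □ H` are products, projections of a determining set determine the
factors; conversely, determining sets of the factors, padded to a common size, are paired up. -/
lemma detNum_boxProd {V W : Type*} [Finite V] [Finite W] [Nonempty V] [Nonempty W]
    (G : SimpleGraph V) (H : SimpleGraph W)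
    (hp : ∀ φ : G.boxProd H ≃g G.boxProd H, ∃ (α : G ≃g G) (β : H ≃g H),
      ∀ a b, φ (a, b) = (α a, β b)) :
    detNum (G.boxProd H) = max (detNum G) (detNum H) := by
  apply le_antisymm
  · obtain ⟨S, hS, hdS⟩ := exists_detNum G
    obtain ⟨T, hT, hdT⟩ := exists_detNum H
    obtain ⟨f, hf⟩ := exists_fin_cover S (max (detNum G) (detNum H)) (by simp [hS])
    obtain ⟨g, hg⟩ := exists_fin_cover T (max (detNum G) (detNum H)) (by simp [hT])
    have hd : IsDeterminingSet (G.boxProd H) ((fun i => (f i, g i)) '' Set.univ) := by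
      intro φ hφ
      obtain ⟨α, β, hαβ⟩ := hp φ
      have key : ∀ i, α (f i) = f i ∧ β (g i) = g i := fun i => by
        have := hφ (f i, g i) ⟨i, trivial, rfl⟩
        rwa [hαβ, Prod.mk.injEq] at this
      have h1 := hdS α (fun v hv => by obtain ⟨i, rfl⟩ := hf hv; exact (key i).1)
      have h2 := hdT β (fun v hv => by obtain ⟨i, rfl⟩ := hg hv; exact (key i).2)
      rintro ⟨a, b⟩
      rw [hαβ, h1, h2]
    refine (detNum_le hd).trans ((Set.ncard_image_le Set.finite_univ).trans ?_)
    simp [Set.ncard_univ]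
  · obtain ⟨S, hS, hd⟩ := exists_detNum (G.boxProd H)
    rw [← hS]
    apply max_le
    · have h : IsDeterminingSet G (Prod.fst '' S) := by
        intro α hα v
        have := hd (prodIso α (SimpleGraph.Iso.refl))
          (fun x hx => Prod.ext (hα _ ⟨x, hx, rfl⟩) rfl) (v, Classical.arbitrary W)
        exact congrArg Prod.fst this
      exact (detNum_le h).trans (Set.ncard_image_le (Set.toFinite S))
    · have h : IsDeterminingSet H (Prod.snd '' S) := by
        intro β hβ v
        have := hd (prodIso (SimpleGraph.Iso.refl) β)
          (fun x hx => Prod.ext rfl (hβ _ ⟨x, hx, rfl⟩)) (Classical.arbitrary V, v)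
        exact congrArg Prod.snd this
      exact (detNum_le h).trans (Set.ncard_image_le (Set.toFinite S))

/-! ### Automorphisms preserving the two kinds of edges -/

/-- Every function on the vertices that is constant along edges is constant
(an elementary form of connectedness). -/
def EdgeConst {V : Type*} (G : SimpleGraph V) : Prop :=
  ∀ {X : Type} (f : V → X), (∀ x y, G.Adj x y → f x = f y) → ∀ x y, f x = f y

/-- If automorphisms of `G □ H` preserve the two kinds of edges and `G`, `H` are connected, each
coordinate of the image of a vertex depends only on the same coordinate of the vertex. -/
lemma prod_of_preserves {V W : Type} [Nonempty V] [Nonempty W]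
    (G : SimpleGraph V) (H : SimpleGraph W)
    (hG : EdgeConst G) (hH : EdgeConst H)
    (hpres : ∀ φ : G.boxProd H ≃g G.boxProd H, ∀ x y, (G.boxProd H).Adj x y →
      (x.2 = y.2 ↔ (φ x).2 = (φ y).2))
    (φ : G.boxProd H ≃g G.boxProd H) : ∃ (α : G ≃g G) (β : H ≃g H),
      ∀ a b, φ (a, b) = (α a, β b) := by
  have split : ∀ ψ : G.boxProd H ≃g G.boxProd H, ∃ (p : V → V) (q : W → W),
      ∀ a b, ψ (a, b) = (p a, q b) := by
    intro ψ
    refine ⟨fun a => (ψ (a, Classical.arbitrary W)).1,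
      fun b => (ψ (Classical.arbitrary V, b)).2, fun a b => Prod.ext ?_ ?_⟩
    · refine hH (fun b => (ψ (a, b)).1) (fun x y hxy => ?_) _ _
      have hadj : (G.boxProd H).Adj (a, x) (a, y) := by simpa using hxy
      have h2 := ψ.map_rel_iff.mpr hadj
      have h3 : (ψ (a, x)).2 ≠ (ψ (a, y)).2 := fun h =>
        hxy.ne ((hpres ψ _ _ hadj).mpr h)
      rcases SimpleGraph.boxProd_adj.mp h2 with h | h
      · exact absurd h.2 h3
      · exact h.2
    · refine hG (fun a => (ψ (a, b)).2) (fun x y hxy => ?_) _ _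
      have hadj : (G.boxProd H).Adj (x, b) (y, b) := by simpa using hxy
      exact (hpres ψ _ _ hadj).mp rfl
  obtain ⟨p, q, h⟩ := split φ
  obtain ⟨p', q', h'⟩ := split φ.symm
  have e1 : ∀ a b, p' (p a) = a ∧ q' (q b) = b := fun a b => by
    have := φ.symm_apply_apply (a, b)
    rwa [h, h', Prod.mk.injEq] at this
  have e2 : ∀ a b, p (p' a) = a ∧ q (q' b) = b := fun a b => by
    have := φ.apply_symm_apply (a, b)
    rwa [h', h, Prod.mk.injEq] at this
  let w : W := Classical.arbitrary W
  let v : V := Classical.arbitrary V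
  refine ⟨⟨⟨p, p', fun a => (e1 a w).1, fun a => (e2 a w).1⟩, ?_⟩,
    ⟨⟨q, q', fun b => (e1 v b).2, fun b => (e2 v b).2⟩, ?_⟩, h⟩
  · intro a a'
    have := φ.map_rel_iff (a := (a, w)) (b := (a', w))
    rw [h, h] at this
    simpa using this
  · intro b b'
    have := φ.map_rel_iff (a := (v, b)) (b := (v, b'))
    rw [h, h] at this
    simpa using this

/-- Every vertex has at most one neighbour on the other side of the bipartition `P`, `¬ P`. -/
def AtMostOneCross {V : Type*} (G : SimpleGraph V) (P : V → Prop) : Prop :=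
  ∀ v u w, G.Adj v u → G.Adj v w → ¬(P v ↔ P u) → ¬(P v ↔ P w) → u = w

/-- `x` and `y` are separated by a bipartition with at most one crossing edge at each vertex. -/
def IsSplit {V : Type*} (G : SimpleGraph V) (x y : V) : Prop :=
  ∃ P, AtMostOneCross G P ∧ ¬(P x ↔ P y)

lemma IsSplit.map {V : Type*} {G : SimpleGraph V} (φ : G ≃g G) {x y : V} (h : IsSplit G x y) :
    IsSplit G (φ x) (φ y) := by
  obtain ⟨P, hP, hxy⟩ := h
  refine ⟨fun v => P (φ.symm v), fun v u w h1 h2 h3 h4 => ?_, by simpa using hxy⟩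
  exact φ.symm.injective (hP _ _ _ (φ.symm.map_rel_iff.mpr h1) (φ.symm.map_rel_iff.mpr h2) h3 h4)

lemma isSplit_map_iff {V : Type*} {G : SimpleGraph V} (φ : G ≃g G) {x y : V} :
    IsSplit G (φ x) (φ y) ↔ IsSplit G x y :=
  ⟨fun h => by simpa using h.map φ.symm, fun h => h.map φ⟩

/-! ### Hypercubes and folded hypercubes -/

lemma Qcube_adj {m : ℕ} {x y : Fin m → ZMod 2} :
    (Qcube m).Adj x y ↔ hammingDist x y = 1 := by
  simp only [Qcube, SimpleGraph.fromRel_adj, hammingDist_comm y x, or_self, and_iff_right_iff_imp]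
  rintro h rfl
  simp at h

lemma FQ_adj {l : ℕ} (hl : 2 ≤ l) {x y : Fin l → ZMod 2} :
    (FQ l).Adj x y ↔ hammingDist x y = 1 ∨ hammingDist x y = l := by
  simp only [FQ, SimpleGraph.fromRel_adj, hammingDist_comm y x, or_self, and_iff_right_iff_imp]
  rintro h rfl
  simp at h
  omega

lemma zmod2_eq_add_one : ∀ a b : ZMod 2, a ≠ b → b = a + 1 := by decide

lemma hammingDist_eq_one {m : ℕ} {x y : Fin m → ZMod 2} (h : hammingDist x y = 1) :
    ∃ i, y = x + Pi.single i 1 := by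
  obtain ⟨i, hi⟩ := Finset.card_eq_one.mp h
  refine ⟨i, funext fun j => ?_⟩
  have hj : x j ≠ y j ↔ j = i := by
    have := Finset.ext_iff.mp hi j
    simpa using this
  by_cases hji : j = i
  · subst hji
    simpa using zmod2_eq_add_one _ _ (hj.mpr rfl)
  · simpa [hji] using (not_not.mp (mt hj.mp hji)).symm

lemma hammingDist_eq_full_iff {l : ℕ} {x y : Fin l → ZMod 2} :
    hammingDist x y = l ↔ ∀ i, x i ≠ y i := by
  have := Finset.card_eq_iff_eq_univ (Finset.univ.filter fun i => x i ≠ y i)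
  rw [Fintype.card_fin] at this
  unfold hammingDist
  rw [this]
  simp [Finset.ext_iff]

lemma hammingDist_update {m : ℕ} (x : Fin m → ZMod 2) (i : Fin m) (c : ZMod 2) (h : x i ≠ c) :
    hammingDist x (Function.update x i c) = 1 := by
  refine Finset.card_eq_one.mpr ⟨i, ?_⟩
  ext j
  by_cases hj : j = i
  · subst hj; simpa using h
  · simp [hj]

/-- Change the coordinates of `x` into those of `y` one at a time. -/
lemma edgeConst_of_cube {m : ℕ} (G : SimpleGraph (Fin m → ZMod 2))
    (hG : ∀ x y, hammingDist x y = 1 → G.Adj x y) : EdgeConst G := by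
  classical
  intro X f hf x y
  have key : ∀ s : Finset (Fin m), f (s.piecewise y x) = f x := by
    intro s
    induction s using Finset.induction_on with
    | empty => simp
    | insert j s _ ih =>
      rw [Finset.piecewise_insert, ← ih]
      by_cases h : s.piecewise y x j = y j
      · rw [← h, Function.update_eq_self]
      · exact (hf _ _ (hG _ _ (hammingDist_update _ _ _ h))).symm
  have := key Finset.univ
  rw [Finset.piecewise_univ] at this
  exact this.symm

/-- A generator of `FQ l` as a Cayley graph of `(ZMod 2)^l`. -/
def IsGen {l : ℕ} (g : Fin l → ZMod 2) : Prop :=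
  (∃ i, g = Pi.single i 1) ∨ g = 1

lemma FQ_adj_add {l : ℕ} (hl : 2 ≤ l) {g : Fin l → ZMod 2} (hg : IsGen g)
    (x : Fin l → ZMod 2) : (FQ l).Adj x (x + g) := by
  rw [FQ_adj hl]
  rcases hg with ⟨i, rfl⟩ | rfl
  · left
    refine Finset.card_eq_one.mpr ⟨i, ?_⟩
    ext j
    by_cases hj : j = i
    · subst hj; simp
    · simp [hj]
  · right
    rw [hammingDist_eq_full_iff]
    intro i
    simp

lemma exists_gen {l : ℕ} (hl : 2 ≤ l) {x y : Fin l → ZMod 2} (h : (FQ l).Adj x y) :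
    ∃ g, IsGen g ∧ y = x + g := by
  rcases (FQ_adj hl).mp h with h | h
  · obtain ⟨i, hi⟩ := hammingDist_eq_one h
    exact ⟨_, .inl ⟨i, rfl⟩, hi⟩
  · exact ⟨1, .inr rfl, funext fun i => zmod2_eq_add_one _ _ (hammingDist_eq_full_iff.mp h i)⟩

lemma add_self_zmod2 {l : ℕ} (g : Fin l → ZMod 2) : g + g = 0 :=
  funext fun i => CharTwo.add_self_eq_zero (g i)

/-- If `g` is the crossing direction at `v`, then it is the crossing direction at each
neighbour `v + h`: for `h ≠ g`, `v + h` and `v + g + h` cannot lie opposite `v` and `v + g` respectively,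
as those vertices already have a crossing neighbour. -/
lemma cross_step {l : ℕ} (hl : 2 ≤ l) {P : (Fin l → ZMod 2) → Prop}
    (hP : AtMostOneCross (FQ l) P) {v g h : Fin l → ZMod 2} (hg : IsGen g) (hh : IsGen h)
    (hv : ¬(P v ↔ P (v + g))) :
    ¬(P (v + h) ↔ P (v + h + g)) ∧ (h ≠ g → (P (v + h) ↔ P v)) := by
  by_cases hgh : h = g
  · subst hgh
    refine ⟨?_, fun h => absurd rfl h⟩
    rw [add_assoc, add_self_zmod2, add_zero]
    tauto
  · have h1 : P (v + h) ↔ P v := by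
      by_contra hc
      have := hP v (v + g) (v + h) (FQ_adj_add hl hg v) (FQ_adj_add hl hh v) hv (by tauto)
      exact hgh (add_left_cancel this).symm
    have h2 : P (v + g + h) ↔ P (v + g) := by
      by_contra hc
      have := hP (v + g) v (v + g + h) (FQ_adj_add hl hg v).symm (FQ_adj_add hl hh _)
        (by tauto) (by tauto)
      have h3 : g + h = 0 := by
        rw [add_assoc] at this
        simpa using this.symm
      apply hgh
      calc h = g + g + h := by rw [add_self_zmod2, zero_add]
        _ = g := by rw [add_assoc, h3, add_zero]
    rw [add_right_comm v h g]
    exact ⟨by tauto, fun _ => h1⟩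

lemma sum_single_one (l : ℕ) : ∑ i : Fin l, (Pi.single i 1 : Fin l → ZMod 2) = 1 := by
  ext j
  simp [Finset.sum_apply, Pi.single_apply]

lemma not_crossing_FQ {l : ℕ} (hl : 2 ≤ l) {P : (Fin l → ZMod 2) → Prop}
    (hP : AtMostOneCross (FQ l) P) {x y : Fin l → ZMod 2} (hxy : (FQ l).Adj x y) :
    P x ↔ P y := by
  classical
  by_contra hc
  obtain ⟨g, hg, rfl⟩ := exists_gen hl hxy
  have key : ∀ s : Finset (Fin l),
      ¬(P (x + ∑ i ∈ s, Pi.single i 1) ↔ P (x + ∑ i ∈ s, Pi.single i 1 + g)) ∧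
      ((∀ i ∈ s, Pi.single i 1 ≠ g) → (P (x + ∑ i ∈ s, Pi.single i 1) ↔ P x)) := by
    intro s
    induction s using Finset.induction_on with
    | empty => simpa using hc
    | insert j s hj ih =>
      have := cross_step hl hP hg (.inl ⟨j, rfl⟩) ih.1
      rw [Finset.sum_insert hj, add_comm (Pi.single j 1), ← add_assoc]
      refine ⟨this.1, fun hs => ?_⟩
      exact (this.2 (hs j (Finset.mem_insert_self _ _))).trans
        (ih.2 fun i hi => hs i (Finset.mem_insert_of_mem hi))
  -- `l ≥ 2` makes the `l + 1` generators distinct.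
  have hne : ∀ i : Fin l, (Pi.single i 1 : Fin l → ZMod 2) ≠ 1 := by
    intro i h
    have : Nontrivial (Fin l) := Fin.nontrivial_iff_two_le.mpr hl
    obtain ⟨j, hj⟩ := exists_ne i
    have := congrFun h j
    simp [hj] at this
  rcases hg with ⟨i, rfl⟩ | rfl
  · obtain ⟨h1, h2⟩ := key (Finset.univ.erase i)
    have h3 := h2 (fun j hj h => by
      have hji := Finset.ne_of_mem_erase hj
      have := congrFun h j
      simp [hji] at this)
    rw [add_assoc, Finset.sum_erase_add _ _ (Finset.mem_univ i), sum_single_one] at h1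
    have := hP x _ _ (FQ_adj_add hl (.inl ⟨i, rfl⟩) x) (FQ_adj_add hl (.inr rfl) x) hc (by tauto)
    exact hne i (add_left_cancel this)
  · have h1 := (key Finset.univ).2 (fun i _ => hne i)
    rw [sum_single_one] at h1
    tauto

/-- Among the edges of `Qcube m □ FQ l`, the splitting ones are exactly the cube edges. -/
lemma isSplit_iff {m l : ℕ} (hl : 2 ≤ l) {x y : (Fin m → ZMod 2) × (Fin l → ZMod 2)}
    (hxy : ((Qcube m).boxProd (FQ l)).Adj x y) :
    IsSplit ((Qcube m).boxProd (FQ l)) x y ↔ x.2 = y.2 := by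
  constructor
  · rintro ⟨P, hP, hc⟩
    rcases SimpleGraph.boxProd_adj.mp hxy with h | h
    · exact h.2
    · exfalso
      -- Restrict the bipartition to the layer of `FQ l` through `x` and `y`.
      have hP' : AtMostOneCross (FQ l) (fun b => P (x.1, b)) := by
        intro v u w h1 h2 h3 h4
        have := hP (x.1, v) (x.1, u) (x.1, w) (by simpa using h1) (by simpa using h2) h3 h4
        exact congrArg Prod.snd this
      have h5 := not_crossing_FQ hl hP' h.1
      apply hc
      have hy : (x.1, y.2) = y := Prod.ext h.2 rfl
      simpa only [hy] using h5
  · intro h2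
    have h1 : (Qcube m).Adj x.1 y.1 := by
      rcases SimpleGraph.boxProd_adj.mp hxy with h | h
      · exact h.1
      · exact absurd h2 h.1.ne
    obtain ⟨i, hi⟩ := hammingDist_eq_one (Qcube_adj.mp h1)
    have cross : ∀ v u, ((Qcube m).boxProd (FQ l)).Adj v u →
        ¬(v.1 i = x.1 i ↔ u.1 i = x.1 i) → u = (v.1 + Pi.single i 1, v.2) := by
      intro v u hvu hc
      rcases SimpleGraph.boxProd_adj.mp hvu with h | h
      · obtain ⟨j, hj⟩ := hammingDist_eq_one (Qcube_adj.mp h.1)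
        have hji : j = i := by
          by_contra hji
          apply hc
          rw [hj]
          simp [Ne.symm hji]
        subst hji
        exact Prod.ext hj h.2.symm
      · exact absurd (by rw [h.2]) hc
    refine ⟨fun v => v.1 i = x.1 i, fun v u w hu hw hcu hcw => ?_, ?_⟩
    · rw [cross v u hu hcu, cross v w hw hcw]
    · simp [hi]

/-! ### The product decomposition -/

lemma hammingDist_append {m l : ℕ} (a a' : Fin m → ZMod 2) (b b' : Fin l → ZMod 2) :
    hammingDist (Fin.append a b) (Fin.append a' b') = hammingDist a a' + hammingDist b b' := by
  simp only [hammingDist, Finset.card_filter, Fin.sum_univ_add, Fin.append_left, Fin.append_right]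

/-- The isomorphism `Q_m □ FQ_l ≅ Q_{m+l,m+1}` given by concatenation of vectors. -/
def boxIso (m l : ℕ) (hl : 2 ≤ l) : (Qcube m).boxProd (FQ l) ≃g EQ (m + l) (m + 1) where
  toEquiv := Fin.appendEquiv m l
  map_rel_iff' := by
    rintro ⟨a, b⟩ ⟨a', b'⟩
    have e1 : ∀ (a a' : Fin m → ZMod 2) (b b' : Fin l → ZMod 2),
        ((∀ i : Fin (m + l), (i : ℕ) + 1 < m + 1 → Fin.append a b i = Fin.append a' b' i) ∧
         (∀ i : Fin (m + l), m + 1 ≤ (i : ℕ) + 1 → Fin.append a b i ≠ Fin.append a' b' i)) ↔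
        a = a' ∧ hammingDist b b' = l := by
      intro a a' b b'
      simp [Fin.forall_fin_add, hammingDist_eq_full_iff, funext_iff]
    have e2 := hammingDist_eq_zero (x := a) (y := a')
    have e3 := hammingDist_eq_zero (x := b) (y := b')
    have e4 : Fin.append a b = Fin.append a' b' ↔ a = a' ∧ b = b' := by
      rw [← hammingDist_eq_zero, hammingDist_append, Nat.add_eq_zero_iff, e2, e3]
    change (EQ (m + l) (m + 1)).Adj (Fin.append a b) (Fin.append a' b') ↔ _
    simp only [EQ, SimpleGraph.fromRel_adj, SimpleGraph.boxProd_adj, Qcube_adj, FQ_adj hl, e1,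
      hammingDist_append, hammingDist_comm a' a, hammingDist_comm b' b, eq_comm (a := a') (b := a),
      or_self, ne_eq, e4]
    rw [← e2, ← e3]
    omega

/-- For `n ≥ 2` and `1 ≤ k ≤ n - 1`,
`det(Q_{n,k}) = max {det(Q_{k-1}), det(FQ_{n-k+1})}`. -/
theorem stmt15 (n k : ℕ) (hn : 2 ≤ n) (hk1 : 1 ≤ k) (hk2 : k ≤ n - 1) :
    detNum (EQ n k) = max (detNum (Qcube (k - 1))) (detNum (FQ (n - k + 1))) := by
  obtain ⟨m, rfl⟩ : ∃ m, k = m + 1 := ⟨k - 1, by omega⟩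
  obtain ⟨l, rfl⟩ : ∃ l, n = m + l := ⟨n - m, by omega⟩
  have hl : 2 ≤ l := by omega
  rw [show m + 1 - 1 = m by omega, show m + l - (m + 1) + 1 = l by omega,
    ← detNum_congr (boxIso m l hl)]
  apply detNum_boxProd
  apply prod_of_preserves
  · exact edgeConst_of_cube _ fun x y h => Qcube_adj.mpr h
  · exact edgeConst_of_cube _ fun x y h => (FQ_adj hl).mpr (.inl h)
  · intro φ x y hxy
    rw [← isSplit_iff hl hxy, ← isSplit_iff hl (φ.map_rel_iff.mpr hxy), isSplit_map_iff]
end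

section
/- For n ≥ 4, the cost of 2-distinguishing the augmented hypercube is ρ(AQ_n) = 3: no 2-coloring with a color class of size at most 2 is distinguishing, and there is a distinguishing 2-coloring whose smaller color class is {0, 1B1, 0B̄0} where B is the all-zeros string of length n−2. -/
/-- The augmented hypercube `AQ_n`: binary `n`-vectors, adjacent iff they differ
in exactly one position, or for some `ℓ ≤ n-2` they agree in the first `ℓ`
positions and differ in all remaining ones. -/
def AQ (n : ℕ) : SimpleGraph (Fin n → ZMod 2) :=
  SimpleGraph.fromRel (fun x y => hammingDist x y = 1 ∨
    ∃ l : ℕ, l ≤ n - 2 ∧ (∀ i : Fin n, (i : ℕ) < l → x i = y i) ∧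
      (∀ i : Fin n, l ≤ (i : ℕ) → x i ≠ y i))

/-! ### The graph as a Cayley graph -/

namespace AugCube
variable {n : ℕ}

/-- The indicator vector of the positions `≥ t`. For `t < n` these form a basis. -/
def suf (n t : ℕ) : Fin n → ZMod 2 := fun i => if t ≤ (i : ℕ) then 1 else 0

/-- The connection set of `AQ n` as a Cayley graph, in the basis `suf`: the basis vectors and
the sums of two consecutive ones. The unit vector at `i` is `suf i + suf (i + 1)` for `i + 1 < n`,
and the last unit vector is `suf (n - 1)`. -/
def Gen (n : ℕ) (g : Fin n → ZMod 2) : Prop :=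
  ∃ i, i < n ∧ (g = suf n i ∨ (i + 1 < n ∧ g = suf n i + suf n (i + 1)))

theorem two_eq_zero : (2 : Fin n → ZMod 2) = 0 := by
  funext i; exact (by decide : (2 : ZMod 2) = 0)

theorem add_self (x : Fin n → ZMod 2) : x + x = 0 := by
  linear_combination x * two_eq_zero

/-- The increment of a vector at position `t`, namely `x t - x (t - 1)` (with `x (-1) = 0`; signs
are irrelevant mod 2). It is the coordinate functional dual to `suf n t`. -/
def jump (t : Fin n) : (Fin n → ZMod 2) →+ ZMod 2 where
  toFun x := x t + if h : (t : ℕ) = 0 then 0 else x ⟨t - 1, by omega⟩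
  map_zero' := by simp
  map_add' x y := by
    split_ifs <;> simp only [Pi.add_apply] <;> ring

theorem jump_suf (t : Fin n) (s : ℕ) : jump t (suf n s) = if s = t then 1 else 0 := by
  simp only [jump, suf, AddMonoidHom.coe_mk, ZeroHom.coe_mk]
  split_ifs <;> first | omega | decide

/-- Independence of the `suf`s, in the form used throughout: the indices of a vanishing sum
cancel in pairs. -/
theorem pair4 {a b c d : ℕ} (ha : a < n) (hb : b < n) (hc : c < n) (hd : d < n)
    (h : suf n a + suf n b + suf n c + suf n d = 0) :
    (a = b ∧ c = d) ∨ (a = c ∧ b = d) ∨ (a = d ∧ b = c) := by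
  have A := congrArg (jump ⟨a, ha⟩) h
  have B := congrArg (jump ⟨b, hb⟩) h
  have C := congrArg (jump ⟨c, hc⟩) h
  have D := congrArg (jump ⟨d, hd⟩) h
  simp only [map_add, map_zero, jump_suf] at A B C D
  have h1 : (1 : ZMod 2) ≠ 0 := by decide
  grind

theorem pair2 {a b : ℕ} (ha : a < n) (h : suf n a + suf n b = 0) : a = b := by
  have A := congrArg (jump ⟨a, ha⟩) h
  simp only [map_add, map_zero, jump_suf] at A
  have h1 : (1 : ZMod 2) ≠ 0 := by decide
  grind

theorem mem6 {a b c d e k : ℕ} (ha : a < n)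
    (h : suf n a + suf n b + suf n c + suf n d + suf n e + suf n k = 0) :
    a = b ∨ a = c ∨ a = d ∨ a = e ∨ a = k := by
  have A := congrArg (jump ⟨a, ha⟩) h
  simp only [map_add, map_zero, jump_suf] at A
  have h1 : (1 : ZMod 2) ≠ 0 := by decide
  grind

/-- The last coordinate of a sum of `suf`s is the parity of the number of terms. -/
theorem odd7 (hn : 0 < n) (a b c d e k l : ℕ) (ha : a < n) (hb : b < n) (hc : c < n)
    (hd : d < n) (he : e < n) (hk : k < n) (hl : l < n) :
    suf n a + suf n b + suf n c + suf n d + suf n e + suf n k + suf n l ≠ 0 := by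
  intro h
  have A := congrFun h ⟨n - 1, by omega⟩
  simp only [suf, Pi.add_apply, Pi.zero_apply] at A
  rw [if_pos (by omega), if_pos (by omega), if_pos (by omega), if_pos (by omega),
    if_pos (by omega), if_pos (by omega), if_pos (by omega)] at A
  revert A; decide

theorem pair6 {a b c d e k : ℕ} (ha : a < n) (hb : b < n) (hc : c < n)
    (hd : d < n) (he : e < n) (hk : k < n)
    (h : suf n a + suf n b + suf n c + suf n d + suf n e + suf n k = 0) :
    (a = b ∧ ((c = d ∧ e = k) ∨ (c = e ∧ d = k) ∨ (c = k ∧ d = e))) ∨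
    (a = c ∧ ((b = d ∧ e = k) ∨ (b = e ∧ d = k) ∨ (b = k ∧ d = e))) ∨
    (a = d ∧ ((b = c ∧ e = k) ∨ (b = e ∧ c = k) ∨ (b = k ∧ c = e))) ∨
    (a = e ∧ ((b = c ∧ d = k) ∨ (b = d ∧ c = k) ∨ (b = k ∧ c = d))) ∨
    (a = k ∧ ((b = c ∧ d = e) ∨ (b = d ∧ c = e) ∨ (b = e ∧ c = d))) := by
  have two := two_eq_zero (n := n)
  rcases mem6 ha h with rfl | rfl | rfl | rfl | rfl
  · exact Or.inl ⟨rfl, pair4 hc hd he hk (by linear_combination h - suf n a * two)⟩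
  · exact Or.inr (Or.inl ⟨rfl, pair4 hb hd he hk (by linear_combination h - suf n a * two)⟩)
  · exact Or.inr (Or.inr (Or.inl
      ⟨rfl, pair4 hb hc he hk (by linear_combination h - suf n a * two)⟩))
  · exact Or.inr (Or.inr (Or.inr (Or.inl
      ⟨rfl, pair4 hb hc hd hk (by linear_combination h - suf n a * two)⟩)))
  · exact Or.inr (Or.inr (Or.inr (Or.inr
      ⟨rfl, pair4 hb hc hd he (by linear_combination h - suf n a * two)⟩)))

theorem odd5 (hn : 0 < n) {a b c d e : ℕ} (ha : a < n) (hb : b < n) (hc : c < n)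
    (hd : d < n) (he : e < n) :
    suf n a + suf n b + suf n c + suf n d + suf n e ≠ 0 := fun h =>
  odd7 hn a b c d e a a ha hb hc hd he ha ha
    (by linear_combination h + suf n a * two_eq_zero)

theorem odd3 (hn : 0 < n) {a b c : ℕ} (ha : a < n) (hb : b < n) (hc : c < n) :
    suf n a + suf n b + suf n c ≠ 0 := fun h =>
  odd5 hn ha hb hc ha ha (by linear_combination h + suf n a * two_eq_zero)

/-- `AQ n` is the Cayley graph of `(ZMod 2)^n` with connection set `Gen n`. -/
theorem adj_iff (x y : Fin n → ZMod 2) (hn : 2 ≤ n): (AQ n).Adj x y ↔ Gen n (x + y) := by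
  have key : ∀ a b : ZMod 2, a ≠ b ↔ a + b = 1 := by decide
  have key0 : ∀ a b : ZMod 2, a = b ↔ a + b = 0 := by decide
  have key3 : ∀ a : ZMod 2, a = 0 ∨ a = 1 := by decide
  have hsymm : ∀ x y : Fin n → ZMod 2, (hammingDist x y = 1 ∨
    ∃ l : ℕ, l ≤ n - 2 ∧ (∀ i : Fin n, (i : ℕ) < l → x i = y i) ∧
      (∀ i : Fin n, l ≤ (i : ℕ) → x i ≠ y i)) ↔ Gen n (x + y) := by
    intro x y
    have h1 : hammingDist x y = 1 ↔
        ∃ i : Fin n, x + y = fun j => if i = j then 1 else 0 := by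
      rw [hammingDist, Finset.card_eq_one]
      refine exists_congr fun i => ?_
      rw [Finset.ext_iff, funext_iff]
      refine forall_congr' fun j => ?_
      simp only [Finset.mem_filter, Finset.mem_univ, true_and, Finset.mem_singleton, key,
        Pi.add_apply]
      rcases key3 (x j + y j) with h | h <;> rw [h] <;> by_cases hij : i = j <;>
        first | (simp [hij]; done) | simp [hij, Ne.symm hij]
    have h2 : ∀ l, ((∀ i : Fin n, (i : ℕ) < l → x i = y i) ∧
      (∀ i : Fin n, l ≤ (i : ℕ) → x i ≠ y i)) ↔ x + y = suf n l := by
      intro l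
      rw [funext_iff, ← forall_and]
      refine forall_congr' fun i => ?_
      rw [key, key0, Pi.add_apply, suf]
      split_ifs with h
      · exact ⟨fun H => H.2 h, fun H => ⟨fun h' => absurd h (by omega), fun _ => H⟩⟩
      · exact ⟨fun H => H.1 (by omega), fun H => ⟨fun _ => H, fun h' => absurd h' h⟩⟩
    have h3 : ∀ i, i + 1 < n → ∀ h : i < n, suf n i + suf n (i + 1) =
        fun j => if (⟨i, h⟩ : Fin n) = j then 1 else 0 := by
      intro i hi h
      funext j
      simp only [suf, Pi.add_apply, Fin.ext_iff]
      split_ifs <;> first | omega | decide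
    have h4 : ∀ h : n - 1 < n, suf n (n - 1) =
        fun j => if (⟨n - 1, h⟩ : Fin n) = j then 1 else 0 := by
      intro h
      funext j
      have := j.2
      simp only [suf, Fin.ext_iff]
      split_ifs <;> first | omega | rfl
    rw [h1]
    simp only [h2]
    constructor
    · rintro (⟨i, hi⟩ | ⟨l, hl, h⟩)
      · refine ⟨i, i.2, ?_⟩
        by_cases hin : (i : ℕ) + 1 < n
        · exact Or.inr ⟨hin, by rw [h3 i hin i.2, hi]⟩
        · left
          have : (i : ℕ) = n - 1 := by omega
          rw [hi, this, h4 (by omega)]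
          funext j
          simp [Fin.ext_iff, this]
      · exact ⟨l, by omega, Or.inl h⟩
    · rintro ⟨i, hi, h | ⟨hi', h⟩⟩
      · by_cases hin : i ≤ n - 2
        · exact Or.inr ⟨i, hin, h⟩
        · obtain rfl : i = n - 1 := by omega
          exact Or.inl ⟨⟨n - 1, hi⟩, by rw [h, h4]⟩
      · exact Or.inl ⟨⟨i, hi⟩, by rw [h, h3 i hi' hi]⟩
  rw [AQ, SimpleGraph.fromRel_adj, hsymm, hsymm, add_comm y x, or_self, and_iff_right_iff_imp]
  rintro ⟨i, hi, h | ⟨hi', h⟩⟩ rfl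
  · rw [add_self] at h
    have := congrFun h ⟨n - 1, by omega⟩
    simp only [suf, Pi.zero_apply] at this
    rw [if_pos (by omega)] at this
    exact absurd this (by decide)
  · rw [add_self] at h
    have := pair2 hi h.symm
    omega

/-! ### Common neighbors in the fan -/

theorem gen_suf {i : ℕ} (hi : i < n) : Gen n (suf n i) := ⟨i, hi, Or.inl rfl⟩

theorem gen_edge {i : ℕ} (hi : i + 1 < n) : Gen n (suf n i + suf n (i + 1)) :=
  ⟨i, by omega, Or.inr ⟨hi, rfl⟩⟩

/-- Among the generators, an edge vector is adjacent only to its two endpoints. -/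
theorem common_edge (hn : 0 < n) {i : ℕ} (hi : i + 1 < n) {w : Fin n → ZMod 2} (h1 : Gen n w)
    (h2 : Gen n (w + (suf n i + suf n (i + 1)))) : w = suf n i ∨ w = suf n (i + 1) := by
  have two := two_eq_zero (n := n)
  obtain ⟨a, ha, rfl | ⟨ha', rfl⟩⟩ := h1 <;> obtain ⟨b, hb, h | ⟨hb', h⟩⟩ := h2
  · have := pair4 (a := a) (b := i) (c := i + 1) (d := b) ha (by omega) hi hb (by grind)
    have : a = i ∨ a = i + 1 := by omega
    rcases this with rfl | rfl <;> simp
  · exact absurd (by grind) (odd5 (a := a) (b := i) (c := i + 1) (d := b) (e := b + 1)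
      hn ha (by omega) hi hb hb')
  · exact absurd (by grind) (odd5 (a := a) (b := a + 1) (c := i) (d := i + 1) (e := b)
      hn ha ha' (by omega) hi hb)
  · have := pair6 (a := a) (b := a + 1) (c := i) (d := i + 1) (e := b) (k := b + 1)
      ha ha' (by omega) hi hb hb' (by grind)
    omega

/-- Among the generators, `suf i` is adjacent only to `suf (i ± 1)` and the two edge vectors
ending at `i`. -/
theorem common_suf (hn : 0 < n) {i : ℕ} (hi : i < n) {w : Fin n → ZMod 2} (h1 : Gen n w)
    (h2 : Gen n (w + suf n i)) :
    (i + 1 < n ∧ (w = suf n i + suf n (i + 1) ∨ w = suf n (i + 1))) ∨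
    (∃ j, i = j + 1 ∧ (w = suf n j ∨ w = suf n j + suf n (j + 1))) := by
  have two := two_eq_zero (n := n)
  obtain ⟨a, ha, rfl | ⟨ha', rfl⟩⟩ := h1 <;> obtain ⟨b, hb, h | ⟨hb', h⟩⟩ := h2
  · exact absurd (by grind) (odd3 (a := a) (b := i) (c := b) hn ha hi hb)
  · have := pair4 (a := a) (b := i) (c := b) (d := b + 1) ha hi hb hb' (by grind)
    have : a = i + 1 ∨ i = a + 1 := by omega
    rcases this with rfl | rfl
    · exact Or.inl ⟨ha, Or.inr rfl⟩
    · exact Or.inr ⟨a, rfl, Or.inl rfl⟩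
  · have := pair4 (a := a) (b := a + 1) (c := i) (d := b) ha ha' hi hb (by grind)
    have : a = i ∨ i = a + 1 := by omega
    rcases this with rfl | rfl
    · exact Or.inl ⟨ha', Or.inl rfl⟩
    · exact Or.inr ⟨a, rfl, Or.inr rfl⟩
  · exact absurd (by grind) (odd5 (a := a) (b := a + 1) (c := i) (d := b) (e := b + 1)
      hn ha ha' hi hb hb')

/-- Common neighbors of `0` and `u = suf 0 + suf 1 + suf (n - 1)`. -/
theorem common_u (hn : 4 ≤ n) {m : ℕ} (hm : m + 1 = n) {w : Fin n → ZMod 2} (h1 : Gen n w)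
    (h2 : Gen n (w + (suf n 0 + suf n 1 + suf n m))) : w = suf n m ∨ w = suf n 0 + suf n 1 := by
  have two := two_eq_zero (n := n)
  have h0 : 0 < n := by omega
  have h1n : 1 < n := by omega
  have hmn : m < n := by omega
  obtain ⟨a, ha, rfl | ⟨ha', rfl⟩⟩ := h1 <;> obtain ⟨b, hb, h | ⟨hb', h⟩⟩ := h2
  · exact absurd (by grind) (odd5 h0 ha h0 h1n hmn hb)
  · have := pair6 ha h0 h1n hmn hb hb' (by grind)
    obtain rfl : a = m := by omega
    exact Or.inl rfl
  · have := pair6 ha ha' h0 h1n hmn hb (by grind)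
    obtain rfl : a = 0 := by omega
    exact Or.inr rfl
  · exact absurd (by grind) (odd7 h0 _ _ _ _ _ _ _ ha ha' h0 h1n hmn hb hb')

/-- The vertices `0`, `u`, `v` have a single common neighbor, `suf (n - 1)`. For `n = 4` the
vertex `v` alone has two additional common neighbors with `0`, so the condition on `u` is
needed. -/
theorem common_uv (hn : 4 ≤ n) {m : ℕ} (hm : m + 1 = n) {w : Fin n → ZMod 2} (h1 : Gen n w)
    (h2 : Gen n (w + (suf n 0 + suf n 1 + suf n m)))
    (h3 : Gen n (w + (suf n 1 + suf n m))) : w = suf n m := by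
  refine (common_u hn hm h1 h2).resolve_right ?_
  rintro rfl
  have two := two_eq_zero (n := n)
  have h0 : 0 < n := by omega
  have hmn : m < n := by omega
  obtain ⟨b, hb, h | ⟨hb', h⟩⟩ := h3
  · exact absurd (by grind) (odd3 h0 h0 hmn hb)
  · have := pair4 h0 hmn hb hb' (by grind)
    omega

/-- The sum `suf i + suf j` is determined among the nonzero common neighbors of `suf i` and
`suf j`, except when `j = i + 2`, where the graph has a further generator `suf (i + 1)` and a
genuine competitor `suf i + suf (i + 1) + suf (i + 2)`. -/
theorem common_suf_suf (hn : 0 < n) {i j : ℕ} (hij : i < j) (hj : j < n)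
    {w : Fin n → ZMod 2} (h1 : Gen n (w + suf n i)) (h2 : Gen n (w + suf n j)) :
    w = 0 ∨ w = suf n i + suf n j ∨
      (j = i + 2 ∧ (w = suf n (i + 1) ∨ w = suf n i + suf n (i + 1) + suf n (i + 2))) := by
  have two := two_eq_zero (n := n)
  have hi : i < n := by omega
  obtain ⟨a, ha, h | ⟨ha', h⟩⟩ := h1 <;> obtain ⟨b, hb, h' | ⟨hb', h'⟩⟩ := h2
  · have := pair4 hi hj ha hb (by grind)
    have : (a = i ∧ b = j) ∨ (a = j ∧ b = i) := by omega
    rcases this with ⟨rfl, rfl⟩ | ⟨rfl, rfl⟩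
    · left; grind
    · right; left; grind
  · exact absurd (by grind) (odd5 hn hi hj ha hb hb')
  · exact absurd (by grind) (odd5 hn hi hj ha ha' hb)
  · have := pair6 hi hj ha ha' hb hb' (by grind)
    have : j = i + 2 ∧ ((a = i ∧ b = i + 1) ∨ (a = i + 1 ∧ b = i)) := by omega
    obtain ⟨rfl, ⟨rfl, rfl⟩ | ⟨rfl, rfl⟩⟩ := this
    · right; right; refine ⟨rfl, Or.inl ?_⟩; grind
    · right; right; refine ⟨rfl, Or.inr ?_⟩; grind

/-- The common neighbors of `suf i` and a disjoint edge vector: `0`, their sum, and vertices that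
are generators or sums of two `suf`s. -/
theorem common_suf_edge (hn : 0 < n) {i j : ℕ} (hi : i < n) (hj : j + 1 < n) (hij : i ≠ j)
    (hij' : i ≠ j + 1) {w : Fin n → ZMod 2} (h1 : Gen n (w + suf n i))
    (h2 : Gen n (w + (suf n j + suf n (j + 1)))) :
    w = 0 ∨ w = suf n i + (suf n j + suf n (j + 1)) ∨ w = suf n j ∨ w = suf n (j + 1) ∨
      w = suf n i + suf n j ∨ w = suf n i + suf n (j + 1) := by
  have two := two_eq_zero (n := n)
  have hj' : j < n := by omega
  obtain ⟨a, ha, h | ⟨ha', h⟩⟩ := h1 <;> obtain ⟨b, hb, h' | ⟨hb', h'⟩⟩ := h2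
  · exact absurd (by grind) (odd5 hn hi hj' hj ha hb)
  · have := pair6 hi hj' hj ha hb hb' (by grind)
    have : a = i ∨ a = j ∨ a = j + 1 := by omega
    rcases this with rfl | rfl | rfl <;> grind
  · have := pair6 hi hj' hj ha ha' hb (by grind)
    have : b = i ∨ b = j ∨ b = j + 1 := by omega
    rcases this with rfl | rfl | rfl <;> grind
  · exact absurd (by grind) (odd7 hn _ _ _ _ _ _ _ hi hj' hj ha ha' hb hb')

/-! ### Symmetries fixing zero -/

/-- An injective self-map of the vertex set that preserves adjacency in both directions (in the
form `Gen (x + y)`) and fixes `0`. -/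
structure IsSym (φ : (Fin n → ZMod 2) → (Fin n → ZMod 2)) : Prop where
  inj : Function.Injective φ
  gen : ∀ x y, Gen n (φ x + φ y) ↔ Gen n (x + y)
  zero : φ 0 = 0

theorem IsSym.map_gen {φ : (Fin n → ZMod 2) → (Fin n → ZMod 2)} (hφ : IsSym φ)
    {g : Fin n → ZMod 2} (hg : Gen n g) : Gen n (φ g) := by
  have := (hφ.gen g 0).2 (by simpa using hg)
  simpa [hφ.zero] using this

theorem suf_ne_zero {i : ℕ} (hi : i < n) : suf n i ≠ 0 := fun h =>
  odd3 (by omega) hi hi hi (by linear_combination 3 * h)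

theorem suf_inj {i j : ℕ} (hi : i < n) (hij : i ≠ j) : suf n i ≠ suf n j := fun h =>
  hij (pair2 hi (by linear_combination h + suf n j * two_eq_zero))

theorem suf_ne_edge {i j k : ℕ} (hi : i < n) (hj : j < n) (hk : k < n) :
    suf n i ≠ suf n j + suf n k := fun h =>
  odd3 (by omega) hi hj hk (by linear_combination h + (suf n j + suf n k) * two_eq_zero)

/-- An inner vertex `suf (i + 1)` has at least three neighbors among the generators, hence is
never sent to a vertex `x` having at most two, `p` and `q`. -/
theorem IsSym.suf_ne {φ : (Fin n → ZMod 2) → (Fin n → ZMod 2)} (hφ : IsSym φ)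
    {i : ℕ} (hi : i + 2 < n) {x p q : Fin n → ZMod 2}
    (hx : ∀ w, Gen n w → Gen n (w + x) → w = p ∨ w = q) : φ (suf n (i + 1)) ≠ x := by
  rintro rfl
  have two := two_eq_zero (n := n)
  have h1 : i < n := by omega
  have h2 : i + 1 < n := by omega
  have a := hx _ (hφ.map_gen (gen_suf h1)) ((hφ.gen _ _).2 (gen_edge h2))
  have b := hx _ (hφ.map_gen (gen_suf hi)) ((hφ.gen _ _).2 (by
    rw [add_comm]; exact gen_edge hi))
  have c := hx _ (hφ.map_gen (gen_edge (i := i + 1) hi)) ((hφ.gen _ _).2 (by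
    convert gen_suf hi using 1; grind))
  have ab : φ (suf n i) ≠ φ (suf n (i + 2)) := hφ.inj.ne (suf_inj h1 (by omega))
  have ac : φ (suf n i) ≠ φ (suf n (i + 1) + suf n (i + 2)) := hφ.inj.ne (suf_ne_edge h1 h2 hi)
  have bc : φ (suf n (i + 2)) ≠ φ (suf n (i + 1) + suf n (i + 2)) :=
    hφ.inj.ne (suf_ne_edge hi h2 hi)
  grind

/-- A symmetry that fixes `0` and preserves the pair `{u, v}` fixes every generator. Common
neighbors pin down `suf m`, a swap of `u` and `v` would send the inner vertex `suf 1` to the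
degree-two vertex `suf 0 + suf 1`, and then the fan is traversed triangle by triangle. -/
theorem IsSym.fix_gen {φ : (Fin n → ZMod 2) → (Fin n → ZMod 2)} (hφ : IsSym φ) (hn : 4 ≤ n)
    {m : ℕ} (hm : m + 1 = n)
    (huv : (φ (suf n 0 + suf n 1 + suf n m) = suf n 0 + suf n 1 + suf n m ∧
        φ (suf n 1 + suf n m) = suf n 1 + suf n m) ∨
      (φ (suf n 0 + suf n 1 + suf n m) = suf n 1 + suf n m ∧
        φ (suf n 1 + suf n m) = suf n 0 + suf n 1 + suf n m))
    {g : Fin n → ZMod 2} (hg : Gen n g) : φ g = g := by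
  have two := two_eq_zero (n := n)
  have h0 : 0 < n := by omega
  have h1 : 1 < n := by omega
  have hmn : m < n := by omega
  have mu : Gen n (suf n m + (suf n 0 + suf n 1 + suf n m)) := by
    convert gen_edge (n := n) (i := 0) h1 using 1; grind
  have mv : Gen n (suf n m + (suf n 1 + suf n m)) := by
    convert gen_suf h1 using 1; grind
  have oneV : Gen n (suf n 1 + (suf n 1 + suf n m)) := by
    convert gen_suf hmn using 1; grind
  have eu : Gen n ((suf n 0 + suf n 1) + (suf n 0 + suf n 1 + suf n m)) := by
    convert gen_suf hmn using 1; grind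
  have mu' := (hφ.gen _ _).2 mu
  have mv' := (hφ.gen _ _).2 mv
  have fixm : φ (suf n m) = suf n m := by
    have gm := hφ.map_gen (gen_suf hmn)
    rcases huv with ⟨hu, hv⟩ | ⟨hu, hv⟩ <;> rw [hu] at mu' <;> rw [hv] at mv'
    · exact common_uv hn hm gm mu' mv'
    · exact common_uv hn hm gm mv' mu'
  rcases huv with ⟨hu, hv⟩ | ⟨hu, hv⟩
  swap
  · exfalso
    have oneV' := (hφ.gen _ _).2 oneV
    rw [hv] at oneV'
    rcases common_u hn hm (hφ.map_gen (gen_suf h1)) oneV' with h | h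
    · rw [← fixm] at h
      exact suf_inj h1 (by omega) (hφ.inj h)
    · exact hφ.suf_ne (i := 0) (by omega) (fun w => common_edge h0 (i := 0) h1) h
  have fixe : φ (suf n 0 + suf n 1) = suf n 0 + suf n 1 := by
    have eu' := (hφ.gen _ _).2 eu
    rw [hu] at eu'
    refine (common_u hn hm (hφ.map_gen (gen_edge (i := 0) h1)) eu').resolve_left fun h => ?_
    rw [← fixm] at h
    exact suf_ne_edge hmn h0 h1 (hφ.inj h).symm
  have fix1 : φ (suf n 1) = suf n 1 := by
    have h := (hφ.gen (suf n 1) (suf n 0 + suf n 1)).2 (by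
      convert gen_suf h0 using 1; grind)
    rw [fixe] at h
    refine (common_edge h0 (i := 0) h1 (hφ.map_gen (gen_suf h1)) h).resolve_left ?_
    refine hφ.suf_ne (i := 0) (by omega) (p := suf n 0 + suf n 1) (q := suf n 1) fun w hw hw' => ?_
    rcases common_suf h0 h0 hw hw' with ⟨_, h⟩ | ⟨j, hj, _⟩
    · exact h
    · omega
  have fix0 : φ (suf n 0) = suf n 0 := by
    have h := (hφ.gen (suf n 0) (suf n 0 + suf n 1)).2 (by
      convert gen_suf h1 using 1; grind)
    rw [fixe] at h
    refine (common_edge h0 (i := 0) h1 (hφ.map_gen (gen_suf h0)) h).resolve_right fun h => ?_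
    rw [← fix1] at h
    exact suf_inj h0 (by omega) (hφ.inj h)
  have main : ∀ i, i + 1 < n → φ (suf n i) = suf n i ∧ φ (suf n (i + 1)) = suf n (i + 1) ∧
      φ (suf n i + suf n (i + 1)) = suf n i + suf n (i + 1) := by
    intro i
    induction i with
    | zero => exact fun _ => ⟨fix0, fix1, fixe⟩
    | succ i ih =>
      intro hi
      have hi' : i + 1 < n := by omega
      obtain ⟨a, b, c⟩ := ih hi'
      have hi0 : i < n := by omega
      -- a generator adjacent to `suf (i + 1)` other than the two already fixed goes to one of
      -- the two remaining neighbors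
      have step : ∀ g, Gen n g → Gen n (g + suf n (i + 1)) → g ≠ suf n i →
          g ≠ suf n i + suf n (i + 1) →
          φ g = suf n (i + 1) + suf n (i + 1 + 1) ∨ φ g = suf n (i + 1 + 1) := by
        intro g hg hg' n1 n2
        have h := (hφ.gen _ _).2 hg'
        rw [b] at h
        rcases common_suf h0 hi' (hφ.map_gen hg) h with ⟨_, h⟩ | ⟨j, hj, h⟩
        · exact h
        · obtain rfl : i = j := by omega
          rcases h with h | h
          · rw [← a] at h; exact absurd (hφ.inj h) n1
          · rw [← c] at h; exact absurd (hφ.inj h) n2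
      have top : φ (suf n (i + 1 + 1)) = suf n (i + 1 + 1) := by
        by_cases him : i + 1 + 1 = m
        · rw [him, fixm]
        refine (step _ (gen_suf hi) (by rw [add_comm]; exact gen_edge hi)
          (suf_inj hi (by omega)) (suf_ne_edge hi hi0 hi')).resolve_left ?_
        exact hφ.suf_ne (i := i + 1) (by omega) fun w => common_edge h0 hi
      refine ⟨b, top, ?_⟩
      refine (step _ (gen_edge hi) (by convert gen_suf hi using 1; grind)
        (suf_ne_edge hi0 hi' hi).symm ?_).resolve_right fun h => ?_
      · intro h
        exact suf_inj hi0 (by omega : i ≠ i + 1 + 1) (by linear_combination -h)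
      · exact suf_ne_edge hi hi' hi (hφ.inj (h.trans top.symm)).symm
  obtain ⟨i, hi, rfl | ⟨hi', rfl⟩⟩ := hg
  · rcases i with _ | i
    · exact fix0
    · exact (main i hi).2.1
  · exact (main i hi').2.2

/-- A symmetry fixing `0` and every generator also fixes the neighbors of each `suf i`. The sum of
two generators is mostly determined by being their common neighbor. In the ambiguous case
`suf i + suf (i + 2)` the competitor is excluded by adjacency to `suf i + suf (i + 3)` or
`suf (i - 1) + suf (i + 2)`, one of which exists because `n ≥ 4`. -/
theorem IsSym.fix_suf_add {φ : (Fin n → ZMod 2) → (Fin n → ZMod 2)} (hφ : IsSym φ) (hn : 4 ≤ n)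
    (hfix : ∀ g, Gen n g → φ g = g) {i : ℕ} (hi : i < n) {g : Fin n → ZMod 2} (hg : Gen n g) :
    φ (suf n i + g) = suf n i + g := by
  have two := two_eq_zero (n := n)
  have h0 : 0 < n := by omega
  have key : ∀ g h, Gen n g → Gen n h →
      Gen n (φ (g + h) + g) ∧ Gen n (φ (g + h) + h) := by
    intro g h hg hh
    constructor
    · have := (hφ.gen (g + h) g).2 (by convert hh using 1; grind)
      rwa [hfix g hg] at this
    · have := (hφ.gen (g + h) h).2 (by convert hg using 1; grind)
      rwa [hfix h hh] at this
  -- an image that is already the value at another fixed point is impossible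
  have ne_fixed : ∀ x y, φ y = y → x ≠ y → φ x ≠ y := fun x y hy hxy h =>
    hxy (hφ.inj (h.trans hy.symm))
  have amb : ∀ i j, i < j → j < n →
      φ (suf n i + suf n j) = suf n i + suf n j ∨
      (j = i + 2 ∧ φ (suf n i + suf n j) = suf n i + suf n (i + 1) + suf n (i + 2)) := by
    intro i j hij hj
    have hi : i < n := by omega
    obtain ⟨k1, k2⟩ := key _ _ (gen_suf hi) (gen_suf hj)
    rcases common_suf_suf h0 hij hj k1 k2 with h | h | ⟨rfl, h | h⟩
    · refine absurd h (ne_fixed _ _ hφ.zero fun h => ?_)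
      have := pair2 hi h
      omega
    · exact Or.inl h
    · exact absurd h (ne_fixed _ _ (hfix _ (gen_suf (by omega)))
        (suf_ne_edge (by omega) hi hj).symm)
    · exact Or.inr ⟨rfl, h⟩
  have lt_case : ∀ i j, i < j → j < n → φ (suf n i + suf n j) = suf n i + suf n j := by
    intro i j hij hj
    refine (amb i j hij hj).resolve_right ?_
    rintro ⟨rfl, h⟩
    have hi : i < n := by omega
    have hi1 : i + 1 < n := by omega
    -- the vertex next to `suf i + suf (i + 2)` but not next to its competitor
    -- lies on whichever side of the path has room
    by_cases hi3 : i + 3 < n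
    · have h3 := (amb i (i + 3) (by omega) hi3).resolve_right (by omega)
      have hadj := (hφ.gen (suf n i + suf n (i + 2)) (suf n i + suf n (i + 3))).2 (by
        convert gen_edge (i := i + 2) hi3 using 1; grind)
      rw [h, h3] at hadj
      obtain ⟨b, hb, h | ⟨hb', h⟩⟩ := hadj
      · have := pair4 hi1 hj hi3 hb (by grind)
        omega
      · exact odd5 h0 hi1 hj hi3 hb hb' (by grind)
    · obtain ⟨k, rfl⟩ : ∃ k, i = k + 1 := ⟨i - 1, by omega⟩
      have hk : k < n := by omega
      have h3 := (amb k (k + 1 + 2) (by omega) hj).resolve_right (by omega)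
      have hadj := (hφ.gen (suf n (k + 1) + suf n (k + 1 + 2)) (suf n k + suf n (k + 1 + 2))).2 (by
        convert gen_edge (i := k) hi using 1; grind)
      rw [h, h3] at hadj
      obtain ⟨b, hb, h | ⟨hb', h⟩⟩ := hadj
      · have := pair4 hk hi hi1 hb (by grind)
        omega
      · exact odd5 h0 hk hi hi1 hb hb' (by grind)
  have suf_case : ∀ j, j < n → φ (suf n i + suf n j) = suf n i + suf n j := by
    intro j hj
    rcases lt_trichotomy i j with h | rfl | h
    · exact lt_case i j h hj
    · rw [add_self, hφ.zero]
    · rw [add_comm]; exact lt_case j i h hi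
  obtain ⟨j, hj, rfl | ⟨hj', rfl⟩⟩ := hg
  · exact suf_case j hj
  by_cases hij : i = j
  · subst hij
    rw [show suf n i + (suf n i + suf n (i + 1)) = suf n (i + 1) by grind]
    exact hfix _ (gen_suf hj')
  by_cases hij' : i = j + 1
  · subst hij'
    rw [show suf n (j + 1) + (suf n j + suf n (j + 1)) = suf n j by grind]
    exact hfix _ (gen_suf hj)
  obtain ⟨k1, k2⟩ := key _ _ (gen_suf hi) (gen_edge hj')
  rcases common_suf_edge h0 hi hj' hij hij' k1 k2 with h | h | h | h | h | h
  · exact absurd h (ne_fixed _ _ hφ.zero fun h => odd3 h0 hi hj hj' (by grind))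
  · exact h
  · refine absurd h (ne_fixed _ _ (hfix _ (gen_suf hj)) fun h => ?_)
    exact hij' (pair2 hi (by grind))
  · refine absurd h (ne_fixed _ _ (hfix _ (gen_suf hj')) fun h => ?_)
    exact hij (pair2 hi (by grind))
  · refine absurd h (ne_fixed _ _ (suf_case j hj) fun h => ?_)
    exact suf_ne_zero hj' (by grind)
  · refine absurd h (ne_fixed _ _ (suf_case (j + 1) hj') fun h => ?_)
    exact suf_ne_zero hj (by grind)

/-- The vectors `suf i` generate the vertex group, as an induction principle. -/
theorem suf_induction {F : (Fin n → ZMod 2) → Prop} (h0 : F 0)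
    (hF : ∀ x i, i < n → F x → F (x + suf n i)) (x : Fin n → ZMod 2) : F x := by
  have two := two_eq_zero (n := n)
  have hs : ∀ x (i : Fin n), F x → F (x + Pi.single i 1) := by
    intro x i hx
    have hsum : Pi.single i 1 = suf n i + if (i : ℕ) + 1 < n then suf n (i + 1) else 0 := by
      have h11 : (1 : ZMod 2) + 1 = 0 := by decide
      funext j
      have := j.2
      simp only [Pi.single_apply, Pi.add_apply, suf, Fin.ext_iff]
      split_ifs <;> simp [suf] <;> first | omega | (split_ifs <;> first | omega | simp [h11])
    rw [hsum, ← add_assoc]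
    split_ifs with h
    · exact hF _ _ h (hF _ _ i.2 hx)
    · rw [add_zero]; exact hF _ _ i.2 hx
  have hsum : ∀ s : Finset (Fin n), F (∑ i ∈ s, Pi.single i (x i)) := by
    intro s
    induction s using Finset.induction_on with
    | empty => simpa using h0
    | insert a s ha ih =>
      rw [Finset.sum_insert ha, add_comm]
      have : ∀ a : ZMod 2, a = 0 ∨ a = 1 := by decide
      rcases this (x a) with h | h <;> rw [h]
      · simpa using ih
      · exact hs _ _ ih
  simpa [Finset.univ_sum_single] using hsum Finset.univ

/-- Propagation from the neighborhood of `0` to the whole graph: if all of the closed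
neighborhood of `x` is fixed, `fix_suf_add` applied to the symmetry conjugated by translation by
`x` shows the same for `x + suf i`. -/
theorem IsSym.eq_id {φ : (Fin n → ZMod 2) → (Fin n → ZMod 2)} (hφ : IsSym φ) (hn : 4 ≤ n)
    (hfix : ∀ g, Gen n g → φ g = g) (x : Fin n → ZMod 2) : φ x = x := by
  have two := two_eq_zero (n := n)
  refine (suf_induction (F := fun x => φ x = x ∧ ∀ g, Gen n g → φ (x + g) = x + g)
    ⟨hφ.zero, by simpa using hfix⟩ ?_ x).1
  rintro x i hi ⟨hx, hg⟩
  refine ⟨hg _ (gen_suf hi), fun g hgen => ?_⟩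
  have hψ : IsSym fun y => φ (x + y) + x :=
    { inj := fun y z h => add_left_cancel (hφ.inj (add_right_cancel h))
      gen := fun y z => by
        rw [show φ (x + y) + x + (φ (x + z) + x) = φ (x + y) + φ (x + z) by grind, hφ.gen,
          show x + y + (x + z) = y + z by grind]
      zero := by simp [hx, add_self] }
  have := hψ.fix_suf_add hn (fun g h => by simp only [hg g h]; grind) hi hgen
  rw [add_assoc]
  grind

/-! ### Automorphisms preserving a small class -/

/-- The linear map `x ↦ x + x₀ • suf n 1`. It exchanges `suf n 0` with the edge vector
`suf n 0 + suf n 1` and fixes every other generator. -/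
def twist (hn : 0 < n) (x : Fin n → ZMod 2) : Fin n → ZMod 2 := 
  fun j => x j + x ⟨0, hn⟩ * suf n 1 j

theorem twist_add (hn : 0 < n) (x y : Fin n → ZMod 2) :
    twist hn (x + y) = twist hn x + twist hn y := by
  funext j; simp only [twist, Pi.add_apply]; ring

theorem twist_twist (hn : 0 < n) (x : Fin n → ZMod 2) : twist hn (twist hn x) = x := by
  have : ∀ a b c : ZMod 2, a + b * c + (b + b * 0) * c = a := by decide
  funext j
  have h1 : suf n 1 ⟨0, hn⟩ = 0 := by simp [suf]
  simp only [twist, h1, this]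

theorem twist_suf_zero (hn : 0 < n) : twist hn (suf n 0) = suf n 0 + suf n 1 := by
  funext j; simp [twist, suf]

theorem twist_suf_succ (hn : 0 < n) (i : ℕ) : twist hn (suf n (i + 1)) = suf n (i + 1) := by
  funext j; simp [twist, suf]

theorem twist_gen (hn : 2 ≤ n) (g : Fin n → ZMod 2) :
    Gen n (twist (by omega) g) ↔ Gen n g := by
  have two := two_eq_zero (n := n)
  have h0 : 0 < n := by omega
  have fwd : ∀ g, Gen n g → Gen n (twist h0 g) := by
    rintro g ⟨i, hi, rfl | ⟨hi', rfl⟩⟩ <;> rcases i with _ | i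
    · rw [twist_suf_zero]; exact gen_edge hn
    · rw [twist_suf_succ]; exact gen_suf hi
    · rw [twist_add, twist_suf_zero, twist_suf_succ]
      convert gen_suf h0 using 1; grind
    · rw [twist_add, twist_suf_succ, twist_suf_succ]; exact gen_edge hi'
  exact ⟨fun h => by simpa [twist_twist] using fwd _ h, fwd g⟩

/-- The automorphism `twist` conjugated by translation by `a`: a nontrivial automorphism
fixing `a`. -/
def twistAut (hn : 2 ≤ n) (a : Fin n → ZMod 2) : AQ n ≃g AQ n where
  toFun x := twist (by omega) (x + a) + a
  invFun x := twist (by omega) (x + a) + a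
  left_inv x := by
    beta_reduce
    rw [add_assoc _ a a, add_self, add_zero, twist_twist, add_assoc, add_self, add_zero]
  right_inv x := by
    beta_reduce
    rw [add_assoc _ a a, add_self, add_zero, twist_twist, add_assoc, add_self, add_zero]
  map_rel_iff' {x y} := by
    have two := two_eq_zero (n := n)
    simp only [Equiv.coe_fn_mk]
    rw [adj_iff _ _ hn, adj_iff _ _ hn, ← twist_gen hn (x + y), twist_add, twist_add, twist_add]
    exact iff_of_eq (congrArg _ (by grind))

/-- Translation by `a`, as an automorphism of the Cayley graph. -/
def translate (hn : 2 ≤ n) (a : Fin n → ZMod 2) : AQ n ≃g AQ n where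
  toFun x := x + a
  invFun x := x + a
  left_inv x := by beta_reduce; rw [add_assoc, add_self, add_zero]
  right_inv x := by beta_reduce; rw [add_assoc, add_self, add_zero]
  map_rel_iff' {x y} := by
    have two := two_eq_zero (n := n)
    simp only [Equiv.coe_fn_mk]
    rw [adj_iff _ _ hn, adj_iff _ _ hn]
    exact iff_of_eq (congrArg _ (by grind))

/-- The obstruction for small classes: any translation preserves the empty set, `twistAut a`
preserves `{a}`, and translation by `a + b` swaps `a` and `b`. -/
theorem not_isDistClass (hn : 2 ≤ n) (S : Set (Fin n → ZMod 2)) (hS : S.ncard ≤ 2) :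
    ¬ IsDistClass (AQ n) S := by
  have two := two_eq_zero (n := n)
  intro h
  have trans : ∀ a, (∀ v, v + a ∈ S ↔ v ∈ S) → a = 0 := fun a ha => by
    simpa [translate] using h (translate hn a) ha 0
  have h0 : 0 < n := by omega
  have hc : S.ncard = 0 ∨ S.ncard = 1 ∨ S.ncard = 2 := by omega
  rcases hc with hc | hc | hc
  · rw [Set.ncard_eq_zero] at hc
    subst hc
    exact suf_ne_zero h0 (trans (suf n 0) (by simp))
  · obtain ⟨a, rfl⟩ := Set.ncard_eq_one.1 hc
    have := h (twistAut hn a) (fun v => by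
      have hz : twist h0 0 = 0 := by funext j; simp [twist]
      have ha : twistAut hn a a = a := by simp [twistAut, add_self, hz]
      rw [Set.mem_singleton_iff, Set.mem_singleton_iff]
      exact ⟨fun hv => (twistAut hn a).injective (hv.trans ha.symm), fun hv => hv ▸ ha⟩)
      (suf n 0 + a)
    have h2 : twist h0 (suf n 0 + a + a) + a = suf n 0 + a := this
    rw [add_assoc _ a a, add_self, add_zero, twist_suf_zero] at h2
    exact suf_ne_zero (i := 1) hn (by grind)
  · obtain ⟨a, b, hab, rfl⟩ := Set.ncard_eq_two.1 hc
    have := trans (a + b) (fun v => by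
      simp only [Set.mem_insert_iff, Set.mem_singleton_iff]
      have h1 : v + (a + b) = a ↔ v = b := by constructor <;> intro h <;> grind
      have h2 : v + (a + b) = b ↔ v = a := by constructor <;> intro h <;> grind
      rw [h1, h2, or_comm])
    exact hab (by linear_combination this - b * two)

/-! ### The three-element class -/

/-- The three vertices are `0`, `u = suf 0 + suf 1 + suf m` and `v = suf 1 + suf m`, where
`m = n - 1`. Among them `u, v` is the only adjacent pair, so `0` is fixed and `u, v` are fixed or
swapped, which is what `IsSym.fix_gen` needs. -/
theorem isDistClass_three (hn : 4 ≤ n) {m : ℕ} (hm : m + 1 = n) :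
    IsDistClass (AQ n) {0, suf n 0 + suf n 1 + suf n m, suf n 1 + suf n m} := by
  have two := two_eq_zero (n := n)
  intro φ hφ
  have h0 : 0 < n := by omega
  have h1 : 1 < n := by omega
  have hmn : m < n := by omega
  have hgen : ∀ x y, Gen n (φ x + φ y) ↔ Gen n (x + y) := fun x y => by
    rw [← adj_iff _ _ (by omega), ← adj_iff _ _ (by omega)]; exact φ.map_rel_iff
  have hinj : Function.Injective φ := φ.injective
  have hu : ¬ Gen n (suf n 0 + suf n 1 + suf n m) := by
    rintro ⟨i, hi, h | ⟨hi', h⟩⟩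
    · have := pair4 h0 h1 hmn hi (by grind)
      omega
    · exact odd5 h0 h0 h1 hmn hi hi' (by grind)
  have hv : ¬ Gen n (suf n 1 + suf n m) := by
    rintro ⟨i, hi, h | ⟨hi', h⟩⟩
    · exact odd3 h0 h1 hmn hi (by grind)
    · have := pair4 h1 hmn hi hi' (by grind)
      omega
  have huv : Gen n ((suf n 0 + suf n 1 + suf n m) + (suf n 1 + suf n m)) := by
    convert gen_suf h0 using 1; grind
  have hu0 : suf n 0 + suf n 1 + suf n m ≠ 0 := odd3 h0 h0 h1 hmn
  have hv0 : suf n 1 + suf n m ≠ 0 := fun h => by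
    have := pair2 h1 h
    omega
  have huv0 : suf n 0 + suf n 1 + suf n m ≠ suf n 1 + suf n m := fun h =>
    suf_ne_zero h0 (by linear_combination h)
  -- only the adjacency pattern of the three vertices matters until the generators are fixed
  generalize hU : suf n 0 + suf n 1 + suf n m = u at *
  generalize hV : suf n 1 + suf n m = v at *
  have m0 := (hφ 0).2 (by simp)
  have mu := (hφ u).2 (by simp)
  have mv := (hφ v).2 (by simp)
  have d1 := hinj.ne hu0
  have d2 := hinj.ne hv0
  have d3 := hinj.ne huv0
  have g1 := hgen u 0
  have g2 := hgen v 0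
  rw [add_zero] at g1 g2
  simp only [Set.mem_insert_iff, Set.mem_singleton_iff] at m0 mu mv
  have fz : φ 0 = 0 := by
    have huv' : Gen n (v + u) := by rwa [add_comm]
    rcases m0 with h | h | h
    · exact h
    · exfalso; rw [h] at g1 g2 d1 d2
      rcases mu with k | k | k <;> rcases mv with l | l | l <;> simp_all
    · exfalso; rw [h] at g1 g2 d1 d2
      rcases mu with k | k | k <;> rcases mv with l | l | l <;> simp_all
  have hsym : IsSym φ := ⟨hinj, hgen, fz⟩
  rw [fz] at d1 d2
  have hcase : (φ u = u ∧ φ v = v) ∨ (φ u = v ∧ φ v = u) := by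
    rcases mu with k | k | k <;> rcases mv with l | l | l <;> simp_all
  rw [← hU, ← hV] at hcase
  rw [add_assoc] at hcase
  exact hsym.eq_id hn fun g hg => hsym.fix_gen hn hm (by rw [add_assoc]; exact hcase) hg

end AugCube

/-- For `n ≥ 4`, `ρ(AQ_n) = 3`: no 2-coloring with a color class of size at most
2 is distinguishing, and `{0, 1B1, 0B̄0}` (with `B` the all-zeros string of
length `n-2`) is a color class of a 2-distinguishing coloring. -/
theorem stmt18 (n : ℕ) (hn : 4 ≤ n) :
    costNum (AQ n) = 3 ∧
    (∀ S : Set (Fin n → ZMod 2), S.ncard ≤ 2 → ¬ IsDistClass (AQ n) S) ∧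
    IsDistClass (AQ n)
      {(0 : Fin n → ZMod 2),
       (fun i => if (i : ℕ) = 0 ∨ (i : ℕ) = n - 1 then 1 else 0 : Fin n → ZMod 2),
       (fun i => if (i : ℕ) = 0 ∨ (i : ℕ) = n - 1 then 0 else 1 : Fin n → ZMod 2)} := by
  have hle := fun S => AugCube.not_isDistClass (n := n) (by omega) S
  have hu : (fun i => if (i : ℕ) = 0 ∨ (i : ℕ) = n - 1 then 1 else 0 : Fin n → ZMod 2) =
      AugCube.suf n 0 + AugCube.suf n 1 + AugCube.suf n (n - 1) := by
    funext j
    have := j.2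
    simp only [AugCube.suf, Pi.add_apply]
    split_ifs <;> first | omega | decide
  have hv : (fun i => if (i : ℕ) = 0 ∨ (i : ℕ) = n - 1 then 0 else 1 : Fin n → ZMod 2) =
      AugCube.suf n 1 + AugCube.suf n (n - 1) := by
    funext j
    have := j.2
    simp only [AugCube.suf, Pi.add_apply]
    split_ifs <;> first | omega | decide
  have hd := AugCube.isDistClass_three hn (m := n - 1) (by omega)
  rw [← hu, ← hv] at hd
  refine ⟨?_, hle, hd⟩
  have h3 : ∀ x y z : Fin n → ZMod 2, ({x, y, z} : Set _).ncard ≤ 3 := fun x y z =>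
    (Set.ncard_insert_le _ _).trans (Nat.succ_le_succ
      ((Set.ncard_insert_le _ _).trans (by rw [Set.ncard_singleton])))
  have hmem : 3 ∈ {k | ∃ S : Set (Fin n → ZMod 2), S.ncard = k ∧ IsDistClass (AQ n) S} := by
    refine ⟨_, le_antisymm (h3 _ _ _) ?_, hd⟩
    by_contra hlt
    exact hle _ (by omega) hd
  refine le_antisymm (Nat.sInf_le hmem) (le_csInf ⟨3, hmem⟩ ?_)
  rintro k ⟨S, rfl, hS⟩
  by_contra hlt
  exact hle S (by omega) hS
end
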